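/- arXiv:1302.2066 — 2 statements merged into one kernel-verified Lean document; each statement's English description precedes it below -/
import Mathlib

section
/- Let (c₁,B₁),…,(cₘ,Bₘ) be a Brascamp–Lieb datum on ℝⁿ with Σᵢ cᵢ nᵢ = n, and suppose there exists a positive definite n×n matrix A satisfying A⁻¹ = Σᵢ cᵢ Bᵢ* (Bᵢ A Bᵢ*)⁻¹ Bᵢ. Then for every collection of nonnegative integrable functions fᵢ : ℝ^{nᵢ} → ℝ one has ∫_{ℝⁿ} ∏ᵢ (fᵢ(Bᵢx))^{cᵢ} dx ≤ C ∏ᵢ (∫_{ℝ^{nᵢ}} fᵢ dx)^{cᵢ}, where C = (det(A) / ∏ᵢ det(Bᵢ A Bᵢ*)^{cᵢ})^{1/2}. -/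
open MeasureTheory Matrix

namespace BL

/-- Differentiation under the integral sign against a compactly supported continuous density. -/
lemma hasDerivAt_integral_compact {d : ℕ} {g : (Fin d → ℝ) → ℝ} (hg : Continuous g)
    (hgc : HasCompactSupport g) {h h' : ℝ → (Fin d → ℝ) → ℝ} {s₀ r : ℝ} (hr : 0 < r)
    (hh : ∀ s ∈ Metric.closedBall s₀ r, Continuous (h s))
    (hh' : ContinuousOn (fun p : ℝ × (Fin d → ℝ) => h' p.1 p.2)
      (Metric.closedBall s₀ r ×ˢ Set.univ))
    (hd : ∀ s ∈ Metric.closedBall s₀ r, ∀ z, HasDerivAt (fun s => h s z) (h' s z) s) :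
    HasDerivAt (fun s => ∫ z, g z * h s z) (∫ z, g z * h' s₀ z) s₀ := by
  have hcomp : IsCompact (Metric.closedBall s₀ r ×ˢ tsupport g) :=
    (isCompact_closedBall s₀ r).prod hgc
  obtain ⟨C, hC⟩ := hcomp.exists_bound_of_continuousOn
    (hh'.mono (Set.prod_mono le_rfl (Set.subset_univ _)))
  have hs₀ : s₀ ∈ Metric.closedBall s₀ r := Metric.mem_closedBall_self hr.le
  have hcs : ∀ k : (Fin d → ℝ) → ℝ, HasCompactSupport (fun z => g z * k z) := fun k =>
    hgc.mul_right
  have h0' : Continuous (h' s₀) := by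
    rw [← continuousOn_univ]
    exact hh'.comp (f := fun z => (s₀, z)) (by fun_prop) (fun z _ => ⟨hs₀, trivial⟩)
  refine (hasDerivAt_integral_of_dominated_loc_of_deriv_le (F := fun s z => g z * h s z)
    (F' := fun s z => g z * h' s z) (bound := fun z => |g z| * C)
    (Metric.closedBall_mem_nhds s₀ hr) ?_ ?_ ?_ ?_ ?_ ?_).2
  · filter_upwards [Metric.closedBall_mem_nhds s₀ hr] with s hs
    exact (hg.mul (hh s hs)).aestronglyMeasurable
  · exact (hg.mul (hh s₀ hs₀)).integrable_of_hasCompactSupport (hcs _)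
  · exact (hg.mul h0').aestronglyMeasurable
  · refine Filter.Eventually.of_forall fun z s hs => ?_
    rw [norm_mul, Real.norm_eq_abs]
    by_cases hz : z ∈ tsupport g
    · exact mul_le_mul_of_nonneg_left (hC (s, z) ⟨hs, hz⟩) (abs_nonneg _)
    · rw [image_eq_zero_of_notMem_tsupport hz]; simp
  · exact ((hg.integrable_of_hasCompactSupport hgc).abs).mul_const C
  · exact Filter.Eventually.of_forall fun z s hs => (hd s hs z).const_mul _

/-- Unnormalised heat flow. -/
noncomputable def H {d : ℕ} (g : (Fin d → ℝ) → ℝ) (t : ℝ) (y : Fin d → ℝ) : ℝ :=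
  ∫ z : Fin d → ℝ, g (y + √t • z) * Real.exp (-(z ⬝ᵥ z) / 4)

lemma gauss_eq {d : ℕ} (z : Fin d → ℝ) :
    Real.exp (-(z ⬝ᵥ z) / 4) = ∏ i, Real.exp (-(1/4) * z i ^ 2) := by
  rw [← Real.exp_sum]; congr 1
  rw [dotProduct, neg_div, Finset.sum_div, ← Finset.sum_neg_distrib]
  exact Finset.sum_congr rfl fun i _ => by ring

lemma gauss_int (d : ℕ) : Integrable (fun z : Fin d → ℝ => Real.exp (-(z ⬝ᵥ z) / 4)) := by
  simp_rw [gauss_eq]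
  exact Integrable.fintype_prod (f := fun _ x => Real.exp (-(1/4) * x ^ 2))
    (fun i => integrable_exp_neg_mul_sq (by norm_num))

lemma gauss_pow : ∃ G : ℝ, 0 < G ∧ ∀ d : ℕ,
    ∫ z : Fin d → ℝ, Real.exp (-(z ⬝ᵥ z) / 4) = G ^ d := by
  refine ⟨∫ x : ℝ, Real.exp (-(1/4) * x ^ 2), ?_, fun d => ?_⟩
  · rw [integral_gaussian]; positivity
  · simp_rw [gauss_eq]
    rw [integral_fintype_prod_volume_eq_pow (fun x : ℝ => Real.exp (-(1/4) * x ^ 2))]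
    simp

lemma H_zero {d : ℕ} (g : (Fin d → ℝ) → ℝ) (y : Fin d → ℝ) :
    H g 0 y = g y * ∫ z : Fin d → ℝ, Real.exp (-(z ⬝ᵥ z) / 4) := by
  simp [H, integral_const_mul]

lemma H_nonneg {d : ℕ} {g : (Fin d → ℝ) → ℝ} (h0 : ∀ y, 0 ≤ g y) (t : ℝ) (y : Fin d → ℝ) :
    0 ≤ H g t y := integral_nonneg fun _ => mul_nonneg (h0 _) (Real.exp_pos _).le

lemma H_bound {d : ℕ} {g : (Fin d → ℝ) → ℝ} {M : ℝ} (hM : ∀ y, ‖g y‖ ≤ M) (t : ℝ)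
    (y : Fin d → ℝ) :
    H g t y ≤ M * ∫ z : Fin d → ℝ, Real.exp (-(z ⬝ᵥ z) / 4) := by
  rw [← integral_const_mul]
  unfold H
  refine (Real.le_norm_self _).trans ((norm_integral_le_of_norm_le ((gauss_int d).const_mul M) ?_))
  refine Filter.Eventually.of_forall fun z => ?_
  rw [norm_mul, Real.norm_of_nonneg (Real.exp_pos _).le]
  exact mul_le_mul_of_nonneg_right (hM _) (Real.exp_pos _).le

lemma H_cont {d : ℕ} {g : (Fin d → ℝ) → ℝ} (hg : Continuous g) {M : ℝ} (hM : ∀ y, ‖g y‖ ≤ M) :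
    Continuous (fun p : ℝ × (Fin d → ℝ) => H g p.1 p.2) := by
  unfold H
  have hE : Continuous (fun z : Fin d → ℝ => Real.exp (-(z ⬝ᵥ z) / 4)) := by
    simp_rw [dotProduct]; fun_prop
  refine continuous_of_dominated (bound := fun z => M * Real.exp (-(z ⬝ᵥ z) / 4)) ?_ ?_
    ((gauss_int d).const_mul M) ?_
  · intro p
    exact ((hg.comp (by fun_prop)).mul hE).aestronglyMeasurable
  · refine fun p => Filter.Eventually.of_forall fun z => ?_
    rw [norm_mul, Real.norm_of_nonneg (Real.exp_pos _).le]
    exact mul_le_mul_of_nonneg_right (hM _) (Real.exp_pos _).le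
  · refine Filter.Eventually.of_forall fun z => ?_
    exact (hg.comp (by fun_prop)).mul continuous_const

lemma H_eq {d : ℕ} (g : (Fin d → ℝ) → ℝ) {t : ℝ} (ht : 0 < t) (y : Fin d → ℝ) :
    H g t y = t ^ (-(d / 2 : ℝ)) *
      ∫ z, g z * Real.exp (-((y - z) ⬝ᵥ (y - z)) / (4 * t)) := by
  have hs : 0 < √t := Real.sqrt_pos.2 ht
  have h1 := Measure.integral_comp_smul (volume : Measure (Fin d → ℝ))
    (fun w => g (y + w) * Real.exp (-(w ⬝ᵥ w) / (4 * t))) (√t)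
  have h2 := integral_add_left_eq_self (μ := (volume : Measure (Fin d → ℝ)))
    (fun z => g z * Real.exp (-((y - z) ⬝ᵥ (y - z)) / (4 * t))) y
  rw [← h2]
  have h3 : ∀ z : Fin d → ℝ, (y - (y + z)) ⬝ᵥ (y - (y + z)) = z ⬝ᵥ z := by intro z; simp
  simp_rw [h3]
  have h4 : |((√t) ^ Module.finrank ℝ (Fin d → ℝ))⁻¹| = t ^ (-(d / 2 : ℝ)) := by
    rw [abs_of_pos (by positivity), Real.rpow_neg ht.le, Real.sqrt_eq_rpow, ← Real.rpow_natCast,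
      ← Real.rpow_mul ht.le]
    simp; ring_nf
  rw [h4, smul_eq_mul] at h1
  rw [← h1, H]
  refine integral_congr_ae (Filter.Eventually.of_forall fun z => ?_)
  simp only [smul_dotProduct, dotProduct_smul, smul_eq_mul]
  congr 2
  rw [← mul_assoc, Real.mul_self_sqrt ht.le]
  field_simp

/-- The derivatives of the heat flow composed with a (partial) isometry. -/
lemma H_deriv {d n : ℕ} {g : (Fin d → ℝ) → ℝ} (hg : Continuous g) (hgc : HasCompactSupport g)
    (B : Matrix (Fin d) (Fin n) ℝ) (hB : B * Bᵀ = 1) {t : ℝ} (ht : 0 < t) (x : Fin n → ℝ) :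
    ∃ (D1 : Fin n → ℝ → ℝ) (D2 : Fin n → ℝ) (q : Fin d → ℝ),
      (∀ j s, HasDerivAt (fun s : ℝ => H g t (B *ᵥ (x + s • Pi.single j 1))) (D1 j s) s) ∧
      (∀ j, HasDerivAt (D1 j) (D2 j) 0) ∧
      HasDerivAt (fun t => H g t (B *ᵥ x)) (∑ j, D2 j) t ∧
      ∀ j, D1 j 0 = (Bᵀ *ᵥ q) j := by
  set v : (Fin d → ℝ) → (Fin d → ℝ) := fun z => B *ᵥ x - z with hv
  set b : Fin n → (Fin d → ℝ) → ℝ := fun j z => (Bᵀ *ᵥ v z) j with hb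
  set c : Fin n → ℝ := fun j => B.col j ⬝ᵥ B.col j with hcdef
  set E : Fin n → ℝ → (Fin d → ℝ) → ℝ := fun j s z =>
    Real.exp (-(v z ⬝ᵥ v z + 2 * b j z * s + c j * s ^ 2) / (4 * t)) with hE
  have hvc : ∀ l, Continuous (fun z => v z l) := by intro l; simp only [hv]; fun_prop
  have hvv : Continuous (fun z => v z ⬝ᵥ v z) := by
    simp only [dotProduct]; exact continuous_finsetSum _ fun l _ => (hvc l).mul (hvc l)
  have hbc : ∀ j, Continuous (b j) := by
    intro j; simp only [hb, mulVec, dotProduct]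
    exact continuous_finsetSum _ fun l _ => continuous_const.mul (hvc l)
  have hEc : ∀ j, Continuous (fun p : ℝ × (Fin d → ℝ) => E j p.1 p.2) := by
    intro j
    have h1 : Continuous (fun p : ℝ × (Fin d → ℝ) => v p.2 ⬝ᵥ v p.2) := hvv.comp continuous_snd
    have h2 : Continuous (fun p : ℝ × (Fin d → ℝ) => b j p.2) := (hbc j).comp continuous_snd
    simp only [hE]
    fun_prop
  have hEd : ∀ j z s, HasDerivAt (fun s => E j s z)
      (-(b j z + c j * s) / (2 * t) * E j s z) s := by
    intro j z s
    have h0 : HasDerivAt (fun s : ℝ => -(v z ⬝ᵥ v z + 2 * b j z * s + c j * s ^ 2) / (4 * t))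
        (-(b j z + c j * s) / (2 * t)) s := by
      have h1 : HasDerivAt (fun s : ℝ => 2 * b j z * s) (2 * b j z) s := by
        simpa using (hasDerivAt_id s).const_mul (2 * b j z)
      have h2 : HasDerivAt (fun s : ℝ => c j * s ^ 2) (c j * (2 * s)) s := by
        simpa using (hasDerivAt_pow 2 s).const_mul (c j)
      refine (((h1.const_add (v z ⬝ᵥ v z)).add h2).neg.div_const (4 * t)).congr_deriv ?_
      field_simp; ring
    convert h0.exp using 1
    simp only [hE]; ring
  have hquad : ∀ j (s : ℝ) z, (B *ᵥ (x + s • Pi.single j 1) - z) ⬝ᵥ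
      (B *ᵥ (x + s • Pi.single j 1) - z) = v z ⬝ᵥ v z + 2 * b j z * s + c j * s ^ 2 := by
    intro j s z
    have h1 : B *ᵥ (x + s • Pi.single j 1) - z = v z + s • B.col j := by
      rw [mulVec_add, mulVec_smul, mulVec_single_one]; simp only [hv]; abel
    have h2 : b j z = v z ⬝ᵥ B.col j := by
      simp only [hb, mulVec]
      rw [dotProduct_comm]; rfl
    rw [h1, h2]
    simp only [add_dotProduct, dotProduct_add, smul_dotProduct, dotProduct_smul, smul_eq_mul, hcdef,
      dotProduct_comm (B.col j) (v z)]
    ring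
  have hbsum : ∀ z, ∑ j, b j z ^ 2 = v z ⬝ᵥ v z := by
    intro z
    have : ∑ j, b j z ^ 2 = (Bᵀ *ᵥ v z) ⬝ᵥ (Bᵀ *ᵥ v z) := by
      simp only [dotProduct, hb, sq]
    rw [this, dotProduct_mulVec, vecMul_transpose, mulVec_mulVec, hB, one_mulVec]
  have hcsum : ∑ j, c j = d := by
    have h1 : (B * Bᵀ).trace = d := by rw [hB]; simp
    rw [← h1]
    simp only [trace, diag_apply, mul_apply, transpose_apply, hcdef, dotProduct, col_apply]
    rw [Finset.sum_comm]
  set T := t ^ (-(d / 2 : ℝ)) with hT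
  have hgi : ∀ k : (Fin d → ℝ) → ℝ, Continuous k → Integrable (fun z => g z * k z) := fun k hk =>
    (hg.mul hk).integrable_of_hasCompactSupport hgc.mul_right
  have hE0 : ∀ j z, E j 0 z = Real.exp (-(v z ⬝ᵥ v z) / (4 * t)) := by
    intro j z; simp [hE]
  have hK : Continuous (fun z => Real.exp (-(v z ⬝ᵥ v z) / (4 * t))) := by fun_prop
  refine ⟨fun j s => T * ∫ z, g z * (-(b j z + c j * s) / (2 * t) * E j s z),
    fun j => T * ∫ z, g z * ((b j z ^ 2 / (4 * t ^ 2) - c j / (2 * t)) *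
      Real.exp (-(v z ⬝ᵥ v z) / (4 * t))),
    fun l => T * ∫ z, g z * (-(v z l) / (2 * t) * Real.exp (-(v z ⬝ᵥ v z) / (4 * t))),
    ?_, ?_, ?_, ?_⟩
  · intro j s
    have h1 : (fun s : ℝ => H g t (B *ᵥ (x + s • Pi.single j 1))) =
        fun s => T * ∫ z, g z * E j s z := by
      funext s
      rw [H_eq g ht]; simp_rw [hquad]
      rfl
    rw [h1]
    refine HasDerivAt.const_mul T (hasDerivAt_integral_compact hg hgc one_pos
      (h' := fun s z => -(b j z + c j * s) / (2 * t) * E j s z) ?_ ?_ ?_)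
    · intro s _
      exact (hEc j).comp (f := fun z => (s, z)) (by fun_prop)
    · have h2 : Continuous (fun p : ℝ × (Fin d → ℝ) => b j p.2) := (hbc j).comp continuous_snd
      have h3 := hEc j
      exact Continuous.continuousOn (by fun_prop)
    · intro s _ z; exact hEd j z s
  · intro j
    have h2 : Continuous (fun p : ℝ × (Fin d → ℝ) => b j p.2) := (hbc j).comp continuous_snd
    have h3 := hEc j
    have key := hasDerivAt_integral_compact hg hgc (s₀ := 0) one_pos
      (h := fun s z => -(b j z + c j * s) / (2 * t) * E j s z)
      (h' := fun s z => (-(c j) / (2 * t)) * E j s z + -(b j z + c j * s) / (2 * t) *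
        (-(b j z + c j * s) / (2 * t) * E j s z)) ?_ ?_ ?_
    · refine (key.const_mul T).congr_deriv ?_
      congr 2
      funext z
      rw [hE0]; field_simp; ring
    · intro s _
      have : Continuous (fun p : ℝ × (Fin d → ℝ) => 
        -(b j p.2 + c j * p.1) / (2 * t) * E j p.1 p.2) := by fun_prop
      exact this.comp (f := fun z => (s, z)) (by fun_prop)
    · exact Continuous.continuousOn (by fun_prop)
    · intro s _ z
      refine HasDerivAt.mul ?_ (hEd j z s)
      have h1 : HasDerivAt (fun s : ℝ => c j * s) (c j) s := by
        simpa using (hasDerivAt_id s).const_mul (c j)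
      exact ((h1.const_add (b j z)).neg.div_const (2 * t))
  · have key := hasDerivAt_integral_compact hg hgc (s₀ := t) (r := t / 2) (by positivity)
      (h := fun s z => Real.exp (-(v z ⬝ᵥ v z) / (4 * s)))
      (h' := fun s z => (v z ⬝ᵥ v z) / (4 * s ^ 2) * Real.exp (-(v z ⬝ᵥ v z) / (4 * s))) ?_ ?_ ?_
    · have h1 : HasDerivAt (fun s : ℝ => s ^ (-(d / 2 : ℝ)))
          (-(d / 2 : ℝ) * t ^ (-(d / 2 : ℝ) - 1)) t :=
        Real.hasDerivAt_rpow_const (Or.inl ht.ne')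
      have h2 := h1.mul key
      have h3 : (fun s => H g s (B *ᵥ x)) =ᶠ[nhds t] ((fun s : ℝ => s ^ (-(d / 2 : ℝ))) * 
          fun s => ∫ z, g z * Real.exp (-(v z ⬝ᵥ v z) / (4 * s))) := by
        filter_upwards [lt_mem_nhds ht] with s hs
        rw [H_eq g hs]; rfl
      refine (h2.congr_of_eventuallyEq h3).congr_deriv ?_
      rw [← Finset.mul_sum, ← integral_finsetSum]
      · rw [Real.rpow_sub_one ht.ne', ← hT]
        have : ∀ z, ∑ j, g z * ((b j z ^ 2 / (4 * t ^ 2) - c j / (2 * t)) *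
            Real.exp (-(v z ⬝ᵥ v z) / (4 * t))) =
            (-(d / (2 * t))) * (g z * Real.exp (-(v z ⬝ᵥ v z) / (4 * t))) +
            g z * ((v z ⬝ᵥ v z) / (4 * t ^ 2) * Real.exp (-(v z ⬝ᵥ v z) / (4 * t))) := by
          intro z
          rw [← Finset.mul_sum, ← Finset.sum_mul, Finset.sum_sub_distrib, ← Finset.sum_div,
            ← Finset.sum_div, hbsum, hcsum]
          ring
        simp_rw [this]
        rw [integral_add, integral_const_mul]
        · ring
        · exact (hgi _ hK).const_mul _
        · exact hgi _ ((hvv.div_const _).mul hK)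
      · intro j _
        have := hbc j
        exact hgi _ (by fun_prop)
    · intro s _; fun_prop
    · have h1 : Continuous (fun p : ℝ × (Fin d → ℝ) => v p.2 ⬝ᵥ v p.2) := hvv.comp continuous_snd
      have hne : ∀ p ∈ (Metric.closedBall t (t / 2) ×ˢ (Set.univ : Set (Fin d → ℝ))), p.1 ≠ 0 := by
        rintro p ⟨hp, -⟩
        rw [Metric.mem_closedBall, Real.dist_eq, abs_le] at hp
        intro h; linarith [hp.1]
      refine ContinuousOn.mul (ContinuousOn.div h1.continuousOn (by fun_prop) ?_)
        (Real.continuous_exp.comp_continuousOn (ContinuousOn.div h1.neg.continuousOn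
          (by fun_prop) ?_))
      · intro p hp; have := hne p hp; positivity
      · intro p hp; have := hne p hp; positivity
    · intro s hs z
      rw [Metric.mem_closedBall, Real.dist_eq, abs_le] at hs
      have hs0 : s ≠ 0 := by intro h; linarith [hs.1]
      have h1 : HasDerivAt (fun s : ℝ => -(v z ⬝ᵥ v z) / (4 * s))
          ((v z ⬝ᵥ v z) / (4 * s ^ 2)) s := by
        have h2 : HasDerivAt (fun s : ℝ => 4 * s) 4 s := by
          simpa using (hasDerivAt_id s).const_mul (4 : ℝ)
        refine ((hasDerivAt_const s (-(v z ⬝ᵥ v z))).div h2 (by positivity)).congr_deriv ?_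
        field_simp; ring
      convert h1.exp using 1; ring
  · intro j
    simp only [mulVec, dotProduct]
    rw [show (∑ l, Bᵀ j l * (T * ∫ z, g z * (-(v z l) / (2 * t) *
        Real.exp (-(∑ i, v z i * v z i) / (4 * t))))) = T * ∑ l, ∫ z, Bᵀ j l * (g z * (-(v z l) / (2 * t) *
        Real.exp (-(v z ⬝ᵥ v z) / (4 * t)))) by
      rw [Finset.mul_sum]
      refine Finset.sum_congr rfl fun l _ => ?_
      rw [integral_const_mul]; simp only [dotProduct]; ring]
    rw [← integral_finsetSum]
    · congr 2
      funext z
      rw [hE0]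
      simp only [hb, mulVec]
      rw [show (∑ l, Bᵀ j l * (g z * (-(v z l) / (2 * t) *
        Real.exp (-(v z ⬝ᵥ v z) / (4 * t))))) = -(g z) / (2 * t) * Real.exp (-(v z ⬝ᵥ v z) / (4 * t)) *
         ∑ l, Bᵀ j l * v z l by
         rw [Finset.mul_sum]; exact Finset.sum_congr rfl fun l _ => by ring]
      simp only [dotProduct]; ring
    · intro l _
      have := hvc l
      exact (hgi _ (by fun_prop)).const_mul _

end BL
namespace BL

lemma second_test {G G' : ℝ → ℝ} {G2 : ℝ} (h1 : ∀ s, HasDerivAt G (G' s) s)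
    (h2 : HasDerivAt G' G2 0) (hmax : ∀ s, G s ≤ G 0) : G2 ≤ 0 := by
  by_contra! hpos
  have hd : deriv G = G' := funext fun s => (h1 s).deriv
  have hlm : IsLocalMax G 0 := Filter.Eventually.of_forall hmax
  have h0 : deriv G 0 = 0 := hlm.deriv_eq_zero
  have hdd : deriv (deriv G) 0 = G2 := by rw [hd, h2.deriv]
  have hmin := isLocalMin_of_deriv_deriv_pos (by rw [hdd]; exact hpos) h0 (h1 0).continuousAt
  have hconst : G =ᶠ[nhds 0] fun _ => G 0 := by
    filter_upwards [hmin] with s hs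
    exact le_antisymm (hmax s) hs
  have h3 : deriv G =ᶠ[nhds 0] deriv (fun _ => G 0) := hconst.deriv
  have h4 := h3.deriv_eq
  rw [hdd] at h4
  simp at h4
  linarith

lemma left_test {h : ℝ → ℝ} {h' t : ℝ} (ht : 0 < t) (hd : HasDerivAt h h' t)
    (hmax : ∀ s, 0 ≤ s → s ≤ t → h s ≤ h t) : 0 ≤ h' := by
  have h1 := hd.hasDerivWithinAt (s := Set.Iio t)
  rw [hasDerivWithinAt_iff_tendsto_slope' (by simp)] at h1
  refine ge_of_tendsto h1 ?_
  have : Set.Ioo 0 t ∈ nhdsWithin t (Set.Iio t) := Ioo_mem_nhdsLT ht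
  filter_upwards [this] with s hs
  rw [slope_def_field]
  exact div_nonneg_of_nonpos (by linarith [hmax s hs.1.le hs.2.le]) (by linarith [hs.2])

lemma prod_rpow_deriv {m : ℕ} (c : Fin m → ℝ) {V : Fin m → ℝ → ℝ} {V' : Fin m → ℝ} {s : ℝ}
    (hpos : ∀ i s, 0 < V i s) (hV : ∀ i, HasDerivAt (V i) (V' i) s) :
    HasDerivAt (fun s => ∏ i, V i s ^ c i)
      ((∏ i, V i s ^ c i) * ∑ i, c i * (V' i / V i s)) s := by
  have hF : ∀ s, ∏ i, V i s ^ c i = Real.exp (∑ i, c i * Real.log (V i s)) := by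
    intro s
    rw [Real.exp_sum]
    exact Finset.prod_congr rfl fun i _ => by rw [Real.rpow_def_of_pos (hpos i s), mul_comm]
  simp_rw [hF]
  refine HasDerivAt.exp ?_
  exact HasDerivAt.fun_sum (u := Finset.univ) (fun i (_ : i ∈ Finset.univ) =>
    ((hV i).log (hpos i s).ne').const_mul (c i))

lemma prod_rpow_deriv2 {m : ℕ} (c : Fin m → ℝ) {V V' : Fin m → ℝ → ℝ} {V2 : Fin m → ℝ}
    (hpos : ∀ i s, 0 < V i s) (hV : ∀ i s, HasDerivAt (V i) (V' i s) s)
    (hV' : ∀ i, HasDerivAt (V' i) (V2 i) 0) :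
    HasDerivAt (fun s => (∏ i, V i s ^ c i) * ∑ i, c i * (V' i s / V i s))
      ((∏ i, V i 0 ^ c i) * ((∑ i, c i * (V' i 0 / V i 0)) ^ 2 +
        ∑ i, c i * (V2 i / V i 0 - (V' i 0 / V i 0) ^ 2))) 0 := by
  have h1 := prod_rpow_deriv c hpos (fun i => hV i 0)
  have h2 : HasDerivAt (fun s => ∑ i, c i * (V' i s / V i s))
      (∑ i, c i * (V2 i / V i 0 - (V' i 0 / V i 0) ^ 2)) 0 := by
    have := HasDerivAt.fun_sum (u := Finset.univ) (fun i (_ : i ∈ Finset.univ) =>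
      ((hV' i).div (hV i 0) (hpos i 0).ne').const_mul (c i))
    refine this.congr_deriv ?_
    refine Finset.sum_congr rfl fun i _ => ?_
    have := (hpos i 0).ne'
    field_simp
  exact (h1.mul h2).congr_deriv (by ring)

/-- The linear algebra inequality behind the monotonicity. -/
lemma geom_ineq {m n : ℕ} {ni : Fin m → ℕ} {c : Fin m → ℝ} (hc : ∀ i, 0 < c i)
    (B : ∀ i, Matrix (Fin (ni i)) (Fin n) ℝ) (hB : ∀ i, B i * (B i)ᵀ = 1)
    (hS : ∀ x : Fin n → ℝ, ∑ i, c i * ((B i *ᵥ x) ⬝ᵥ (B i *ᵥ x)) = x ⬝ᵥ x)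
    (q : ∀ i, Fin (ni i) → ℝ) :
    ∑ j, (∑ i, c i * ((B i)ᵀ *ᵥ q i) j) ^ 2 ≤ ∑ j, ∑ i, c i * (((B i)ᵀ *ᵥ q i) j) ^ 2 := by
  set v : Fin n → ℝ := fun j => ∑ i, c i * ((B i)ᵀ *ᵥ q i) j with hv
  have h1 : ∑ j, v j ^ 2 = v ⬝ᵥ v := by simp [dotProduct, sq]
  have h2 : ∑ j, ∑ i, c i * (((B i)ᵀ *ᵥ q i) j) ^ 2 = ∑ i, c i * (q i ⬝ᵥ q i) := by
    rw [Finset.sum_comm]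
    refine Finset.sum_congr rfl fun i _ => ?_
    rw [← Finset.mul_sum]; congr 1
    have : ∑ j, (((B i)ᵀ *ᵥ q i) j) ^ 2 = ((B i)ᵀ *ᵥ q i) ⬝ᵥ ((B i)ᵀ *ᵥ q i) := by
      simp [dotProduct, sq]
    rw [this, dotProduct_mulVec, vecMul_transpose, mulVec_mulVec, hB, one_mulVec]
  have h3 : v ⬝ᵥ v = ∑ i, c i * ((B i *ᵥ v) ⬝ᵥ q i) := by
    have : ∀ i, (B i *ᵥ v) ⬝ᵥ q i = ∑ j, v j * ((B i)ᵀ *ᵥ q i) j := by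
      intro i
      rw [dotProduct_comm, dotProduct_mulVec, ← mulVec_transpose, dotProduct_comm]; rfl
    simp_rw [this, Finset.mul_sum]
    rw [Finset.sum_comm]
    simp only [dotProduct]
    refine Finset.sum_congr rfl fun j _ => ?_
    rw [show v j * v j = v j * ∑ i, c i * ((B i)ᵀ *ᵥ q i) j from rfl, Finset.mul_sum]
    exact Finset.sum_congr rfl fun i _ => by ring
  have h4 : ∀ i, (B i *ᵥ v) ⬝ᵥ q i ≤ ((B i *ᵥ v) ⬝ᵥ (B i *ᵥ v) + q i ⬝ᵥ q i) / 2 := by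
    intro i
    simp only [dotProduct]
    rw [← Finset.sum_add_distrib, Finset.sum_div]
    exact Finset.sum_le_sum fun l _ => by nlinarith [sq_nonneg ((B i *ᵥ v) l - q i l)]
  have h5 : v ⬝ᵥ v ≤ (v ⬝ᵥ v + ∑ i, c i * (q i ⬝ᵥ q i)) / 2 := by
    calc v ⬝ᵥ v = ∑ i, c i * ((B i *ᵥ v) ⬝ᵥ q i) := h3
      _ ≤ ∑ i, c i * (((B i *ᵥ v) ⬝ᵥ (B i *ᵥ v) + q i ⬝ᵥ q i) / 2) :=
        Finset.sum_le_sum fun i _ => mul_le_mul_of_nonneg_left (h4 i) (hc i).le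
      _ = _ := by
        rw [← hS v, ← Finset.sum_add_distrib, Finset.sum_div]
        exact Finset.sum_congr rfl fun i _ => by ring
  rw [h1, h2]; linarith

lemma comparison {m n : ℕ} {ni : Fin m → ℕ} {c : Fin m → ℝ} (hc : ∀ i, 0 < c i)
    (B : ∀ i, Matrix (Fin (ni i)) (Fin n) ℝ) (hB : ∀ i, B i * (B i)ᵀ = 1)
    (hS : ∀ x : Fin n → ℝ, ∑ i, c i * ((B i *ᵥ x) ⬝ᵥ (B i *ᵥ x)) = x ⬝ᵥ x)
    {g : ∀ i, (Fin (ni i) → ℝ) → ℝ} (hg : ∀ i, Continuous (g i))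
    (hgc : ∀ i, HasCompactSupport (g i)) (hg0 : ∀ i y, 0 ≤ g i y)
    {φ : (Fin n → ℝ) → ℝ} (hφ : Continuous φ) (hφc : HasCompactSupport φ)
    {ε : ℝ} (hε : 0 < ε)
    (hstart : ∀ x, H φ 0 x ≤ ∏ i, (H (g i) 0 (B i *ᵥ x) + ε) ^ c i) {T : ℝ} (hT : 0 < T) :
    H φ T 0 ≤ ∏ i, (H (g i) T 0 + ε) ^ c i := by
  by_contra! hcon
  have hpos : ∀ i t x, 0 < H (g i) t (B i *ᵥ x) + ε := fun i t x =>
    add_pos_of_nonneg_of_pos (H_nonneg (hg0 i) _ _) hε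
  set F : ℝ → (Fin n → ℝ) → ℝ := fun t x => ∏ i, (H (g i) t (B i *ᵥ x) + ε) ^ c i with hF
  have hF0 : ∀ t x, 0 < F t x := fun t x =>
    Finset.prod_pos fun i _ => Real.rpow_pos_of_pos (hpos i t x) _
  have hconF : 0 < H φ T 0 - F T 0 := by simpa [hF] using hcon
  set η : ℝ := (H φ T 0 - F T 0) / (2 * ((2 * n + 1) * T)) with hη
  have hη0 : 0 < η := by positivity
  set Ψ : ℝ → (Fin n → ℝ) → ℝ := fun t x =>
    H φ t x - F t x - η * (x ⬝ᵥ x + (2 * n + 1) * t) with hΨ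
  have hΨT : 0 < Ψ T 0 := by
    have : η * ((2 * n + 1) * T) = (H φ T 0 - F T 0) / 2 := by
      rw [hη]; field_simp
    simp only [hΨ, dotProduct_zero, zero_add, this]; linarith
  obtain ⟨M, hM⟩ := hφc.exists_bound_of_continuous hφ
  choose Mi hMi using fun i => (hgc i).exists_bound_of_continuous (hg i)
  have hwc := H_cont hφ hM
  have hΨc : Continuous (fun p : ℝ × (Fin n → ℝ) => Ψ p.1 p.2) := by
    have h1 : ∀ i, Continuous (fun p : ℝ × (Fin n → ℝ) => H (g i) p.1 (B i *ᵥ p.2)) := fun i =>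
      (H_cont (hg i) (hMi i)).comp (f := fun p : ℝ × (Fin n → ℝ) => (p.1, B i *ᵥ p.2))
        (by fun_prop)
    have h2 : Continuous (fun p : ℝ × (Fin n → ℝ) => F p.1 p.2) := by
      refine continuous_finsetProd _ fun i _ => ?_
      exact ((h1 i).add continuous_const).rpow_const fun p => Or.inl (hpos i p.1 p.2).ne'
    have h3 : Continuous (fun p : ℝ × (Fin n → ℝ) => p.2 ⬝ᵥ p.2) := by
      simp only [dotProduct]; fun_prop
    simp only [hΨ]
    fun_prop
  set K := M * ∫ z : Fin n → ℝ, Real.exp (-(z ⬝ᵥ z) / 4) with hK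
  have hwK : ∀ t x, H φ t x ≤ K := fun t x => H_bound hM t x
  have hnorm : ∀ x : Fin n → ℝ, ‖x‖ ^ 2 ≤ x ⬝ᵥ x := by
    intro x
    have h0 : 0 ≤ x ⬝ᵥ x := Finset.sum_nonneg fun i _ => mul_self_nonneg _
    have : ‖x‖ ≤ √(x ⬝ᵥ x) := by
      refine (pi_norm_le_iff_of_nonneg (Real.sqrt_nonneg _)).2 fun j => ?_
      refine Real.le_sqrt_of_sq_le ?_
      rw [Real.norm_eq_abs, sq_abs, sq]
      exact Finset.single_le_sum (f := fun j => x j * x j) (fun i _ => mul_self_nonneg _)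
        (Finset.mem_univ j)
    calc ‖x‖ ^ 2 ≤ √(x ⬝ᵥ x) ^ 2 := by gcongr
      _ = _ := Real.sq_sqrt h0
  have hK0 : 0 < K := by linarith [hwK T 0, hF0 T 0]
  set R := √(K / η) with hR
  have hout : ∀ t x, 0 ≤ t → R < ‖x‖ → Ψ t x < Ψ T 0 := by
    intro t x ht hx
    refine lt_trans ?_ hΨT
    have h1 : K / η < ‖x‖ ^ 2 := by
      rw [← Real.sq_sqrt (show 0 ≤ K / η by positivity)]; gcongr
    have h2 : K < η * (x ⬝ᵥ x) := by
      rw [div_lt_iff₀ hη0] at h1; nlinarith [hnorm x]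
    have h3 : 0 ≤ η * ((2 * n + 1) * t) := by positivity
    have := hwK t x
    have := hF0 t x
    simp only [hΨ]; nlinarith
  obtain ⟨⟨t₀, x₀⟩, hmem, hmax'⟩ := ((isCompact_Icc (a := (0:ℝ)) (b := T)).prod
    (isCompact_closedBall (0 : Fin n → ℝ) R)).exists_isMaxOn
    ⟨(T, 0), ⟨⟨hT.le, le_rfl⟩, Metric.mem_closedBall_self (Real.sqrt_nonneg _)⟩⟩ hΨc.continuousOn
  have hTm : Ψ T 0 ≤ Ψ t₀ x₀ := hmax' (a := (T, 0))
    ⟨⟨hT.le, le_rfl⟩, Metric.mem_closedBall_self (Real.sqrt_nonneg _)⟩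
  have ht₀ := hmem.1
  simp only at ht₀
  have hmax : ∀ t x, 0 ≤ t → t ≤ T → Ψ t x ≤ Ψ t₀ x₀ := by
    intro t x h0 h1
    by_cases hx : ‖x‖ ≤ R
    · exact hmax' (a := (t, x)) ⟨⟨h0, h1⟩, by simpa using hx⟩
    · exact (hout t x h0 (not_le.1 hx)).le.trans hTm
  have ht₀pos : 0 < t₀ := by
    rcases ht₀.1.lt_or_eq with h | h
    · exact h
    · exfalso
      have h1 : Ψ t₀ x₀ ≤ 0 := by
        rw [← h]
        have h2 := hstart x₀
        have h3 : 0 ≤ η * (x₀ ⬝ᵥ x₀) := mul_nonneg hη0.le ((sq_nonneg _).trans (hnorm x₀))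
        simp only [hΨ, hF]; linarith
      linarith
  obtain ⟨W1, W2, -, hW1, hW2, hWt, -⟩ := H_deriv hφ hφc (1 : Matrix (Fin n) (Fin n) ℝ) (by simp)
    ht₀pos x₀
  simp only [one_mulVec] at hW1 hWt
  choose D1 D2 q hD1 hD2 hDt hDq using fun i => H_deriv (hg i) (hgc i) (B i) (hB i) ht₀pos x₀
  -- time derivative
  have hFt := prod_rpow_deriv c (V := fun i t => H (g i) t (B i *ᵥ x₀) + ε)
    (fun i s => hpos i s x₀) (fun i => (hDt i).add_const ε)
  have hbt : HasDerivAt (fun t : ℝ => η * (x₀ ⬝ᵥ x₀ + (2 * n + 1) * t)) (η * (2 * n + 1)) t₀ := by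
    have : HasDerivAt (fun t : ℝ => (2 * n + 1 : ℝ) * t) (2 * n + 1) t₀ := by
      simpa using (hasDerivAt_id t₀).const_mul (2 * n + 1 : ℝ)
    exact (this.const_add _).const_mul η
  have htime := left_test ht₀pos ((hWt.sub hFt).sub hbt)
    (fun s hs0 hs1 => hmax s x₀ hs0 (hs1.trans ht₀.2))
  -- space derivatives
  have hspace : ∀ j, W2 j - (F t₀ x₀ * ((∑ i, c i * (D1 i j 0 / (H (g i) t₀ (B i *ᵥ x₀) + ε))) ^ 2 +
      ∑ i, c i * (D2 i j / (H (g i) t₀ (B i *ᵥ x₀) + ε) -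
        (D1 i j 0 / (H (g i) t₀ (B i *ᵥ x₀) + ε)) ^ 2))) - η * 2 ≤ 0 := by
    intro j
    have h1 : ∀ i s, HasDerivAt (fun s : ℝ => H (g i) t₀ (B i *ᵥ (x₀ + s • Pi.single j 1)) + ε)
        (D1 i j s) s := fun i s => (hD1 i j s).add_const ε
    have hp : ∀ i (s : ℝ), 0 < H (g i) t₀ (B i *ᵥ (x₀ + s • Pi.single j 1)) + ε :=
      fun i s => hpos i t₀ _
    have h2 := prod_rpow_deriv2 c (V := fun i s => H (g i) t₀ (B i *ᵥ (x₀ + s • Pi.single j 1)) + ε)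
      hp h1 (fun i => hD2 i j)
    have hq : ∀ s : ℝ, HasDerivAt (fun s : ℝ => η * ((x₀ + s • Pi.single j 1) ⬝ᵥ
        (x₀ + s • Pi.single j 1) + (2 * n + 1) * t₀)) (η * (2 * x₀ j + 2 * s)) s := by
      intro s
      have e : ∀ s : ℝ, (x₀ + s • Pi.single j 1) ⬝ᵥ (x₀ + s • Pi.single j 1) =
          x₀ ⬝ᵥ x₀ + (2 * x₀ j * s + s ^ 2) := by
        intro s
        simp only [add_dotProduct, dotProduct_add, smul_dotProduct, dotProduct_smul, smul_eq_mul,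
          dotProduct_single_one, single_one_dotProduct,
          Pi.add_apply, Pi.smul_apply, Pi.single_eq_same]
        ring
      simp_rw [e]
      have h3 : HasDerivAt (fun s : ℝ => 2 * x₀ j * s) (2 * x₀ j) s := by
        simpa using (hasDerivAt_id s).const_mul (2 * x₀ j)
      have h4 : HasDerivAt (fun s : ℝ => s ^ 2) (2 * s) s := by
        simpa using hasDerivAt_pow 2 s
      exact (((h3.add h4).const_add _).add_const _).const_mul η
    have hq2 : HasDerivAt (fun s : ℝ => η * (2 * x₀ j + 2 * s)) (η * 2) 0 := by
      have : HasDerivAt (fun s : ℝ => 2 * s) 2 0 := by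
        simpa using (hasDerivAt_id (0:ℝ)).const_mul (2:ℝ)
      exact (this.const_add _).const_mul η
    have key := second_test (fun s => ((hW1 j s).sub (prod_rpow_deriv c hp (fun i => h1 i s))).sub
      (hq s)) (((hW2 j).sub h2).sub hq2) (by
        intro s
        have := hmax t₀ (x₀ + s • Pi.single j 1) ht₀.1 ht₀.2
        simpa [hΨ, hF] using this)
    simpa [hF] using key
  have hsum := Finset.sum_nonpos fun j (_ : j ∈ Finset.univ) => hspace j
  set p : Fin m → Fin n → ℝ := fun i j => D1 i j 0 / (H (g i) t₀ (B i *ᵥ x₀) + ε) with hp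
  have hgeo := geom_ineq hc B hB hS (fun i => (H (g i) t₀ (B i *ᵥ x₀) + ε)⁻¹ • q i)
  have hpq : ∀ i j, ((B i)ᵀ *ᵥ ((H (g i) t₀ (B i *ᵥ x₀) + ε)⁻¹ • q i)) j = p i j := by
    intro i j
    rw [mulVec_smul, Pi.smul_apply, ← hDq, hp, smul_eq_mul]; ring
  simp_rw [hpq] at hgeo
  have hDs : ∑ i, c i * ((∑ j, D2 i j) / (H (g i) t₀ (B i *ᵥ x₀) + ε)) =
      ∑ j, ∑ i, c i * (D2 i j / (H (g i) t₀ (B i *ᵥ x₀) + ε)) := by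
    rw [Finset.sum_comm]
    exact Finset.sum_congr rfl fun i _ => by rw [Finset.sum_div, Finset.mul_sum]
  rw [hDs] at htime
  simp only [mul_sub, Finset.sum_sub_distrib, Finset.sum_add_distrib, ← Finset.mul_sum,
    Finset.sum_const, Finset.card_univ, Fintype.card_fin, nsmul_eq_mul] at hsum htime hgeo
  have hFF := mul_le_mul_of_nonneg_left hgeo (hF0 t₀ x₀).le
  change 0 ≤ _ - F t₀ x₀ * _ - _ at htime
  change _ - F t₀ x₀ * (∑ j, (∑ i, c i * p i j) ^ 2 + (_ - ∑ j, ∑ i, c i * (p i j) ^ 2)) - _ ≤ _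
    at hsum
  rw [mul_add, mul_sub] at hsum
  nlinarith
end BL
namespace BL

lemma geom_cc {m n : ℕ} {ni : Fin m → ℕ} {c : Fin m → ℝ} (hc : ∀ i, 0 < c i)
    (B : ∀ i, Matrix (Fin (ni i)) (Fin n) ℝ) (hB : ∀ i, B i * (B i)ᵀ = 1)
    (hS : ∀ x : Fin n → ℝ, ∑ i, c i * ((B i *ᵥ x) ⬝ᵥ (B i *ᵥ x)) = x ⬝ᵥ x)
    (hdim : ∑ i, c i * (ni i : ℝ) = (n : ℝ))
    {g : ∀ i, (Fin (ni i) → ℝ) → ℝ} (hg : ∀ i, Continuous (g i))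
    (hgc : ∀ i, HasCompactSupport (g i)) (hg0 : ∀ i y, 0 ≤ g i y) :
    Integrable (fun x : Fin n → ℝ => ∏ i, g i (B i *ᵥ x) ^ c i) ∧
    ∫ x : Fin n → ℝ, ∏ i, g i (B i *ᵥ x) ^ c i ≤ ∏ i, (∫ y, g i y) ^ c i := by
  set φ : (Fin n → ℝ) → ℝ := fun x => ∏ i, g i (B i *ᵥ x) ^ c i with hφd
  have hφ : Continuous φ := by
    refine continuous_finsetProd _ fun i _ => ?_
    exact ((hg i).comp (by fun_prop)).rpow_const fun p => Or.inr (hc i).le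
  have hφ0 : ∀ x, 0 ≤ φ x := fun x =>
    Finset.prod_nonneg fun i _ => Real.rpow_nonneg (hg0 i _) _
  have hdotc : ∀ d : ℕ, Continuous (fun y : Fin d → ℝ => y ⬝ᵥ y) := by
    intro d; simp only [dotProduct]; fun_prop
  have hφc : HasCompactSupport φ := by
    have hbd : ∀ i, ∃ R : ℝ, ∀ y ∈ tsupport (g i), ‖y ⬝ᵥ y‖ ≤ R := fun i =>
      (hgc i).exists_bound_of_continuousOn (hdotc _).continuousOn
    choose R hR using hbd
    refine HasCompactSupport.intro (isCompact_closedBall (0 : Fin n → ℝ) (√(∑ i, c i * R i)))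
      fun x hx => ?_
    by_contra hne
    apply hx
    have hmem : ∀ i, B i *ᵥ x ∈ tsupport (g i) := by
      intro i
      by_contra h
      apply hne
      refine Finset.prod_eq_zero (Finset.mem_univ i) ?_
      rw [image_eq_zero_of_notMem_tsupport h, Real.zero_rpow (hc i).ne']
    have hxx : x ⬝ᵥ x ≤ ∑ i, c i * R i := by
      rw [← hS x]
      exact Finset.sum_le_sum fun i _ => mul_le_mul_of_nonneg_left
        ((Real.le_norm_self _).trans (hR i _ (hmem i))) (hc i).le
    rw [mem_closedBall_zero_iff]
    refine (pi_norm_le_iff_of_nonneg (Real.sqrt_nonneg _)).2 fun j => ?_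
    refine Real.le_sqrt_of_sq_le ?_
    rw [Real.norm_eq_abs, sq_abs, sq]
    exact (Finset.single_le_sum (f := fun j => x j * x j) (fun i _ => mul_self_nonneg _)
        (Finset.mem_univ j)).trans hxx
  have hφi : Integrable φ := hφ.integrable_of_hasCompactSupport hφc
  refine ⟨hφi, ?_⟩
  obtain ⟨G, hG0, hG⟩ := gauss_pow
  -- powers with total exponent `n`
  have hpow : ∀ a : ℝ, 0 < a → ∏ i, (a ^ (ni i : ℝ)) ^ c i = a ^ (n : ℝ) := by
    intro a ha
    rw [← hdim, Real.rpow_sum_of_pos ha]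
    exact Finset.prod_congr rfl fun i _ => by rw [← Real.rpow_mul ha.le, mul_comm]
  have step1 : ∀ T : ℝ, 0 < T → ∀ ε : ℝ, 0 < ε → H φ T 0 ≤ ∏ i, (H (g i) T 0 + ε) ^ c i := by
    intro T hT ε hε
    refine comparison hc B hB hS hg hgc hg0 hφ hφc hε (fun x => ?_) hT
    rw [H_zero, hG]
    have h1 : φ x * G ^ n = ∏ i, (H (g i) 0 (B i *ᵥ x)) ^ c i := by
      rw [← Real.rpow_natCast, ← hpow G hG0, hφd, ← Finset.prod_mul_distrib]
      refine Finset.prod_congr rfl fun i _ => ?_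
      rw [H_zero, hG, Real.rpow_natCast, Real.mul_rpow (hg0 i _) (by positivity)]
    rw [h1]
    refine Finset.prod_le_prod (fun i _ => Real.rpow_nonneg (H_nonneg (hg0 i) _ _) _) fun i _ => ?_
    exact Real.rpow_le_rpow (H_nonneg (hg0 i) _ _) (by linarith) (hc i).le
  have step2 : ∀ T : ℝ, 0 < T → H φ T 0 ≤ ∏ i, (H (g i) T 0) ^ c i := by
    intro T hT
    have hcont : Continuous (fun ε : ℝ => ∏ i, (H (g i) T 0 + ε) ^ c i) := by
      refine continuous_finsetProd _ fun i _ => ?_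
      exact (continuous_const.add continuous_id).rpow_const fun p => Or.inr (hc i).le
    have ht : Filter.Tendsto (fun ε : ℝ => ∏ i, (H (g i) T 0 + ε) ^ c i)
        (nhdsWithin 0 (Set.Ioi 0)) (nhds (∏ i, (H (g i) T 0) ^ c i)) := by
      have := hcont.tendsto 0
      simp only [add_zero] at this
      exact this.mono_left nhdsWithin_le_nhds
    refine ge_of_tendsto ht ?_
    filter_upwards [self_mem_nhdsWithin] with ε hε
    exact step1 T hT ε hε
  have step3 : ∀ T : ℝ, 0 < T → ∫ z, φ z * Real.exp (-(z ⬝ᵥ z) / (4 * T)) ≤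
      ∏ i, (∫ y, g i y) ^ c i := by
    intro T hT
    have h1 := step2 T hT
    have hu : ∀ i, H (g i) T 0 ≤ (T ^ (-(1 / 2) : ℝ)) ^ (ni i : ℝ) * ∫ y, g i y := by
      intro i
      rw [H_eq (g i) hT, ← Real.rpow_mul hT.le]
      rw [show (-(1 / 2) : ℝ) * (ni i : ℝ) = -((ni i : ℝ) / 2) by ring]
      refine mul_le_mul_of_nonneg_left ?_ (by positivity)
      have hgi : Integrable (g i) := (hg i).integrable_of_hasCompactSupport (hgc i)
      refine integral_mono_of_nonneg (Filter.Eventually.of_forall fun z =>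
        mul_nonneg (hg0 i z) (Real.exp_pos _).le) hgi (Filter.Eventually.of_forall fun z => ?_)
      refine mul_le_of_le_one_right (hg0 i z) (Real.exp_le_one_iff.2 ?_)
      refine div_nonpos_of_nonpos_of_nonneg (neg_nonpos.2 ?_) (by positivity)
      exact Finset.sum_nonneg fun _ _ => mul_self_nonneg _
    have h2 : ∏ i, (H (g i) T 0) ^ c i ≤
        (T ^ (-(1 / 2) : ℝ)) ^ (n : ℝ) * ∏ i, (∫ y, g i y) ^ c i := by
      rw [← hpow _ (Real.rpow_pos_of_pos hT _), ← Finset.prod_mul_distrib]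
      refine Finset.prod_le_prod (fun i _ => Real.rpow_nonneg (H_nonneg (hg0 i) _ _) _)
        fun i _ => ?_
      rw [← Real.mul_rpow (by positivity) (integral_nonneg (hg0 i))]
      exact Real.rpow_le_rpow (H_nonneg (hg0 i) _ _) (hu i) (hc i).le
    have h3 := h1.trans h2
    rw [H_eq φ hT, ← Real.rpow_mul hT.le,
      show (-(1 / 2) : ℝ) * (n : ℝ) = -((n : ℝ) / 2) by ring] at h3
    have h4 := le_of_mul_le_mul_left h3 (Real.rpow_pos_of_pos hT _)
    simpa using h4
  have hlim : Filter.Tendsto (fun T : ℝ => ∫ z, φ z * Real.exp (-(z ⬝ᵥ z) / (4 * T)))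
      Filter.atTop (nhds (∫ z, φ z)) := by
    refine tendsto_integral_filter_of_dominated_convergence φ ?_ ?_ hφi ?_
    · refine Filter.Eventually.of_forall fun T => ?_
      have := hdotc n
      exact Continuous.aestronglyMeasurable (by fun_prop)
    · filter_upwards [Filter.eventually_gt_atTop 0] with T hT
      refine Filter.Eventually.of_forall fun z => ?_
      rw [Real.norm_of_nonneg (mul_nonneg (hφ0 z) (Real.exp_pos _).le)]
      refine mul_le_of_le_one_right (hφ0 z) (Real.exp_le_one_iff.2 ?_)
      refine div_nonpos_of_nonpos_of_nonneg (neg_nonpos.2 ?_) (by positivity)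
      exact Finset.sum_nonneg fun _ _ => mul_self_nonneg _
    · refine Filter.Eventually.of_forall fun z => ?_
      have h1 : Filter.Tendsto (fun T : ℝ => -(z ⬝ᵥ z) / (4 * T)) Filter.atTop (nhds 0) :=
        Filter.Tendsto.const_div_atTop (Filter.tendsto_id.const_mul_atTop (by norm_num)) _
      have h2 := ((Real.continuous_exp.tendsto 0).comp h1).const_mul (φ z)
      simpa using h2
  refine le_of_tendsto hlim ?_
  filter_upwards [Filter.eventually_gt_atTop 0] with T hT
  exact step3 T hT

lemma approx {d : ℕ} {f : (Fin d → ℝ) → ℝ} (hf : Integrable f) (hf0 : ∀ y, 0 ≤ f y) :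
    ∃ g : ℕ → (Fin d → ℝ) → ℝ, (∀ k, Continuous (g k)) ∧ (∀ k, HasCompactSupport (g k)) ∧
      (∀ k y, 0 ≤ g k y) ∧ (∀ᵐ y, Filter.Tendsto (fun k => g k y) Filter.atTop (nhds (f y))) ∧
      Filter.Tendsto (fun k => ∫ y, g k y) Filter.atTop (nhds (∫ y, f y)) := by
  choose g₀ hcs hle hcont hint using fun k : ℕ =>
    hf.exists_hasCompactSupport_integral_sub_le (ε := 1 / ((k : ℝ) + 1)) (by positivity)
  set g : ℕ → (Fin d → ℝ) → ℝ := fun k y => max (g₀ k y) 0 with hg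
  have hgcont : ∀ k, Continuous (g k) := fun k => (hcont k).max continuous_const
  have hgcs : ∀ k, HasCompactSupport (g k) := fun k =>
    (hcs k).comp_left (g := fun x : ℝ => max x 0) (by simp)
  have hgi : ∀ k, Integrable (g k) := fun k => (hgcont k).integrable_of_hasCompactSupport (hgcs k)
  have hgle : ∀ k, ∫ y, ‖g k y - f y‖ ≤ 1 / ((k : ℝ) + 1) := by
    intro k
    refine le_trans (integral_mono ((hgi k).sub hf).norm (hf.sub (hint k)).norm fun y => ?_) (hle k)
    have h1 := abs_max_sub_max_le_abs (g₀ k y) (f y) 0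
    rw [max_eq_left (hf0 y)] at h1
    simp only [Real.norm_eq_abs, Pi.sub_apply]
    rw [abs_sub_comm (f y)]
    exact h1
  have hl0 : Filter.Tendsto (fun k : ℕ => ∫ y, ‖g k y - f y‖) Filter.atTop (nhds 0) :=
    squeeze_zero (fun k => integral_nonneg fun _ => norm_nonneg _) hgle
      tendsto_one_div_add_atTop_nhds_zero_nat
  have hL1 : Filter.Tendsto (fun k => eLpNorm (g k - f) 1 volume) Filter.atTop (nhds 0) := by
    have : ∀ k, eLpNorm (g k - f) 1 volume = ENNReal.ofReal (∫ y, ‖g k y - f y‖) := by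
      intro k
      rw [eLpNorm_one_eq_lintegral_enorm]
      exact (ofReal_integral_norm_eq_lintegral_enorm ((hgi k).sub hf)).symm
    simp_rw [this]
    simpa using ENNReal.tendsto_ofReal hl0
  obtain ⟨ns, hns, hae⟩ := (tendstoInMeasure_of_tendsto_eLpNorm one_ne_zero
    (fun k => (hgi k).aestronglyMeasurable) hf.aestronglyMeasurable hL1).exists_seq_tendsto_ae
  refine ⟨fun k => g (ns k), fun k => hgcont _, fun k => hgcs _, fun k y => le_max_right _ _, hae, ?_⟩
  have hconv : Filter.Tendsto (fun k => ∫ y, g k y) Filter.atTop (nhds (∫ y, f y)) := by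
    rw [tendsto_iff_norm_sub_tendsto_zero]
    refine squeeze_zero (fun _ => norm_nonneg _) (fun k => ?_) hl0
    rw [← integral_sub (hgi k) hf]
    exact norm_integral_le_integral_norm _
  exact hconv.comp hns.tendsto_atTop

lemma geom {m n : ℕ} {ni : Fin m → ℕ} {c : Fin m → ℝ} (hc : ∀ i, 0 < c i)
    (B : ∀ i, Matrix (Fin (ni i)) (Fin n) ℝ) (hB : ∀ i, B i * (B i)ᵀ = 1)
    (hS : ∀ x : Fin n → ℝ, ∑ i, c i * ((B i *ᵥ x) ⬝ᵥ (B i *ᵥ x)) = x ⬝ᵥ x)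
    (hdim : ∑ i, c i * (ni i : ℝ) = (n : ℝ))
    {f : ∀ i, (Fin (ni i) → ℝ) → ℝ} (hf : ∀ i, Integrable (f i)) (hf0 : ∀ i y, 0 ≤ f i y) :
    ∫ x : Fin n → ℝ, ∏ i, f i (B i *ᵥ x) ^ c i ≤ ∏ i, (∫ y, f i y) ^ c i := by
  choose g hgc hgcs hg0 hgae hgint using fun i => approx (hf i) (hf0 i)
  have hrhs : 0 ≤ ∏ i, (∫ y, f i y) ^ c i :=
    Finset.prod_nonneg fun i _ => Real.rpow_nonneg (integral_nonneg (hf0 i)) _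
  by_cases hI : Integrable (fun x : Fin n → ℝ => ∏ i, f i (B i *ᵥ x) ^ c i)
  swap
  · rwa [integral_undef hI]
  have hF0 : ∀ x : Fin n → ℝ, 0 ≤ ∏ i, f i (B i *ᵥ x) ^ c i := fun x =>
    Finset.prod_nonneg fun i _ => Real.rpow_nonneg (hf0 i _) _
  have hpull : ∀ i, ∀ᵐ x : Fin n → ℝ,
      Filter.Tendsto (fun k => g i k (B i *ᵥ x)) Filter.atTop (nhds (f i (B i *ᵥ x))) := by
    intro i
    have hsurj : Function.Surjective (Matrix.toLin' (B i)) := by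
      intro y
      exact ⟨(B i)ᵀ *ᵥ y, by rw [toLin'_apply, mulVec_mulVec, hB, one_mulVec]⟩
    obtain ⟨a, -, ha⟩ := LinearMap.exists_map_addHaar_eq_smul_addHaar (Matrix.toLin' (B i))
      (volume : Measure (Fin n → ℝ)) (volume : Measure (Fin (ni i) → ℝ)) hsurj
    have hmeas : Measurable (Matrix.toLin' (B i)) :=
      (LinearMap.continuous_of_finiteDimensional _).measurable
    have h1 : ∀ᵐ y ∂(Measure.map (Matrix.toLin' (B i)) (volume : Measure (Fin n → ℝ))),
        Filter.Tendsto (fun k => g i k y) Filter.atTop (nhds (f i y)) := by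
      rw [ha]; exact Measure.ae_smul_measure (hgae i) a
    have h2 := ae_of_ae_map hmeas.aemeasurable h1
    simpa only [toLin'_apply] using h2
  have hlimF : ∀ᵐ x : Fin n → ℝ, Filter.Tendsto
      (fun k => ENNReal.ofReal (∏ i, g i k (B i *ᵥ x) ^ c i)) Filter.atTop
      (nhds (ENNReal.ofReal (∏ i, f i (B i *ᵥ x) ^ c i))) := by
    filter_upwards [ae_all_iff.2 hpull] with x hx
    refine ENNReal.tendsto_ofReal (tendsto_finsetProd _ fun i _ => ?_)
    exact (hx i).rpow_const (Or.inr (hc i).le)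
  have hcc := fun k => geom_cc hc B hB hS hdim (g := fun i => g i k) (fun i => hgc i k)
    (fun i => hgcs i k) (fun i => hg0 i k)
  have hlimR : Filter.Tendsto (fun k => ENNReal.ofReal (∏ i, (∫ y, g i k y) ^ c i)) Filter.atTop
      (nhds (ENNReal.ofReal (∏ i, (∫ y, f i y) ^ c i))) := by
    refine ENNReal.tendsto_ofReal (tendsto_finsetProd _ fun i _ => ?_)
    exact (hgint i).rpow_const (Or.inr (hc i).le)
  rw [← ENNReal.ofReal_le_ofReal_iff hrhs,
    ofReal_integral_eq_lintegral_ofReal hI (Filter.Eventually.of_forall hF0)]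
  calc ∫⁻ x : Fin n → ℝ, ENNReal.ofReal (∏ i, f i (B i *ᵥ x) ^ c i)
      = ∫⁻ x : Fin n → ℝ, Filter.liminf (fun k => ENNReal.ofReal (∏ i, g i k (B i *ᵥ x) ^ c i))
          Filter.atTop := by
        refine lintegral_congr_ae ?_
        filter_upwards [hlimF] with x hx
        exact hx.liminf_eq.symm
    _ ≤ Filter.liminf (fun k => ∫⁻ x : Fin n → ℝ,
          ENNReal.ofReal (∏ i, g i k (B i *ᵥ x) ^ c i)) Filter.atTop := by
        refine lintegral_liminf_le' fun k => ?_
        exact (hcc k).1.aestronglyMeasurable.aemeasurable.ennreal_ofReal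
    _ ≤ Filter.liminf (fun k => ENNReal.ofReal (∏ i, (∫ y, g i k y) ^ c i)) Filter.atTop := by
        refine Filter.liminf_le_liminf (Filter.Eventually.of_forall fun k => ?_)
        rw [← ofReal_integral_eq_lintegral_ofReal (hcc k).1 (Filter.Eventually.of_forall fun x =>
          Finset.prod_nonneg fun i _ => Real.rpow_nonneg (hg0 i k _) _)]
        exact ENNReal.ofReal_le_ofReal (hcc k).2
    _ = _ := hlimR.liminf_eq

lemma change_var {d : ℕ} (S : Matrix (Fin d) (Fin d) ℝ) (hS : S.det ≠ 0) (f : (Fin d → ℝ) → ℝ) :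
    ∫ x, f (S *ᵥ x) = |S.det|⁻¹ * ∫ x, f x := by
  have hemb : MeasurableEmbedding (Matrix.toLin' S) := by
    have hu : IsUnit S.det := isUnit_iff_ne_zero.2 hS
    have hc : Continuous (Matrix.toLin' S) := LinearMap.continuous_of_finiteDimensional _
    refine hc.measurableEmbedding fun x y hxy => ?_
    rw [toLin'_apply, toLin'_apply] at hxy
    have := congrArg (fun v => S⁻¹ *ᵥ v) hxy
    simpa [mulVec_mulVec, nonsing_inv_mul S hu] using this
  have h1 := hemb.integral_map (μ := volume) f
  rw [Real.map_matrix_volume_pi_eq_smul_volume_pi hS, integral_smul_measure] at h1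
  simp only [toLin'_apply] at h1
  rw [← h1, abs_inv, ENNReal.toReal_ofReal (by positivity), smul_eq_mul]

lemma change_var_int {d : ℕ} (S : Matrix (Fin d) (Fin d) ℝ) (hS : S.det ≠ 0)
    {f : (Fin d → ℝ) → ℝ} (hf : Integrable f) : Integrable (fun x => f (S *ᵥ x)) := by
  have hc : Continuous (Matrix.toLin' S) := LinearMap.continuous_of_finiteDimensional _
  have h1 : Integrable f (Measure.map (Matrix.toLin' S) volume) := by
    rw [Real.map_matrix_volume_pi_eq_smul_volume_pi hS]
    exact hf.smul_measure ENNReal.ofReal_ne_top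
  have := h1.comp_measurable hc.measurable
  simpa [Function.comp_def, toLin'_apply] using this

open scoped MatrixOrder Matrix.Norms.L2Operator in
lemma exists_factor {d : ℕ} {M : Matrix (Fin d) (Fin d) ℝ} (hM : M.PosDef) :
    ∃ S : Matrix (Fin d) (Fin d) ℝ, S * Sᵀ = M ∧ S.det ≠ 0 := by
  obtain ⟨C, hC⟩ : ∃ C : Matrix (Fin d) (Fin d) ℝ, M = Cᴴ * C := by
    exact CStarAlgebra.nonneg_iff_eq_star_mul_self.mp hM.posSemidef.nonneg
  have h : Cᵀ * Cᵀᵀ = M := by rw [hC, transpose_transpose, conjTranspose_eq_transpose_of_trivial]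
  refine ⟨Cᵀ, h, fun h0 => ?_⟩
  have := hM.det_pos
  rw [← h, det_mul, h0] at this
  simp at this

end BL

theorem brascamp_lieb_inequality
    (m n : ℕ) (ni : Fin m → ℕ) (c : Fin m → ℝ) (hc : ∀ i, 0 < c i)
    (B : ∀ i, Matrix (Fin (ni i)) (Fin n) ℝ)
    (hB : ∀ i, Function.Surjective (B i).mulVec)
    (hdim : ∑ i, c i * (ni i : ℝ) = (n : ℝ))
    (A : Matrix (Fin n) (Fin n) ℝ) (hA : A.PosDef)
    (hjohn : A⁻¹ = ∑ i, c i • ((B i)ᵀ * (B i * A * (B i)ᵀ)⁻¹ * B i))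
    (f : ∀ i, (Fin (ni i) → ℝ) → ℝ)
    (hf0 : ∀ i x, 0 ≤ f i x) (hfint : ∀ i, Integrable (f i)) :
    ∫ x : Fin n → ℝ, ∏ i, (f i ((B i).mulVec x)) ^ (c i) ≤
      Real.sqrt (A.det / ∏ i, ((B i * A * (B i)ᵀ).det) ^ (c i)) *
        ∏ i, (∫ y : Fin (ni i) → ℝ, f i y) ^ (c i) := by
  have hM : ∀ i, (B i * A * (B i)ᵀ).PosDef := by
    intro i
    have hinj : Function.Injective (B i).vecMul := by
      intro y z hyz
      obtain ⟨w, hw⟩ := hB i (y - z)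
      have h1 : (y - z) ᵥ* B i = 0 := by
        rw [sub_vecMul]; exact sub_eq_zero.2 hyz
      have h2 : (y - z) ⬝ᵥ (y - z) = 0 := by
        nth_rewrite 2 [← hw]
        rw [dotProduct_mulVec, h1, zero_dotProduct]
      exact sub_eq_zero.1 (dotProduct_self_eq_zero.1 h2)
    have := hA.mul_mul_conjTranspose_same hinj
    rwa [conjTranspose_eq_transpose_of_trivial] at this
  obtain ⟨S, hSA, hSd⟩ := BL.exists_factor hA
  choose Q hQ hQd using fun i => BL.exists_factor (hM i)
  have hSu : IsUnit S.det := isUnit_iff_ne_zero.2 hSd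
  have hQu : ∀ i, IsUnit (Q i).det := fun i => isUnit_iff_ne_zero.2 (hQd i)
  set B' : ∀ i, Matrix (Fin (ni i)) (Fin n) ℝ := fun i => (Q i)⁻¹ * B i * S with hB'
  have hQB : ∀ i, Q i * B' i = B i * S := by
    intro i
    simp only [hB']
    rw [Matrix.mul_assoc, mul_nonsing_inv_cancel_left _ _ (hQu i)]
  have hQt : ∀ i, (Q i)ᵀ * ((Q i)⁻¹)ᵀ = 1 := by
    intro i
    rw [← transpose_mul, nonsing_inv_mul _ (hQu i), transpose_one]
  have h1 : ∀ i, B' i * (B' i)ᵀ = 1 := by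
    intro i
    have : B' i * (B' i)ᵀ = (Q i)⁻¹ * (B i * (S * Sᵀ) * (B i)ᵀ) * ((Q i)⁻¹)ᵀ := by
      simp only [hB', transpose_mul, Matrix.mul_assoc]
    rw [this, hSA, ← hQ, ← Matrix.mul_assoc, nonsing_inv_mul _ (hQu i), Matrix.one_mul, hQt]
  have h2 : ∑ i, c i • ((B' i)ᵀ * B' i) = 1 := by
    have h3 : ∀ i, (B' i)ᵀ * B' i = Sᵀ * ((B i)ᵀ * (B i * A * (B i)ᵀ)⁻¹ * B i) * S := by
      intro i
      rw [← hQ, Matrix.mul_inv_rev, ← transpose_nonsing_inv]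
      simp only [hB', transpose_mul, Matrix.mul_assoc]
    simp_rw [h3]
    have h4 : ∑ i, c i • (Sᵀ * ((B i)ᵀ * (B i * A * (B i)ᵀ)⁻¹ * B i) * S) = Sᵀ * A⁻¹ * S := by
      rw [hjohn, Matrix.mul_sum, Matrix.sum_mul]
      exact Finset.sum_congr rfl fun i _ => by rw [Matrix.mul_smul, Matrix.smul_mul]
    rw [h4, ← hSA, Matrix.mul_inv_rev, ← Matrix.mul_assoc, Matrix.mul_assoc,
      nonsing_inv_mul _ hSu, Matrix.mul_one]
    exact mul_nonsing_inv _ (by rwa [det_transpose])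
  have h5 : ∀ x : Fin n → ℝ, ∑ i, c i * ((B' i *ᵥ x) ⬝ᵥ (B' i *ᵥ x)) = x ⬝ᵥ x := by
    intro x
    have h6 : ∀ i, (B' i *ᵥ x) ⬝ᵥ (B' i *ᵥ x) = x ⬝ᵥ (((B' i)ᵀ * B' i) *ᵥ x) := by
      intro i
      rw [dotProduct_mulVec, ← mulVec_transpose, mulVec_mulVec, dotProduct_comm]
    have h7 : x ⬝ᵥ x = x ⬝ᵥ ((∑ i, c i • ((B' i)ᵀ * B' i)) *ᵥ x) := by rw [h2, one_mulVec]
    rw [h7, sum_mulVec, dotProduct_sum]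
    refine Finset.sum_congr rfl fun i _ => ?_
    rw [h6, smul_mulVec, dotProduct_smul, smul_eq_mul]
  have key := BL.geom hc B' h1 h5 hdim (f := fun i y => f i (Q i *ᵥ y))
    (fun i => BL.change_var_int _ (hQd i) (hfint i)) (fun i y => hf0 i _)
  simp only [mulVec_mulVec, hQB] at key
  have h8 := BL.change_var S hSd (fun x => ∏ i, f i (B i *ᵥ x) ^ c i)
  simp only [mulVec_mulVec] at h8
  rw [h8] at key
  simp_rw [fun i => BL.change_var (Q i) (hQd i) (f i)] at key
  have hSpos : 0 < |S.det| := abs_pos.2 hSd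
  have hQpos : ∀ i, 0 < |(Q i).det| := fun i => abs_pos.2 (hQd i)
  rw [inv_mul_le_iff₀ hSpos] at key
  refine key.trans (le_of_eq ?_)
  have h9 : ∏ i, (|(Q i).det|⁻¹ * ∫ y, f i y) ^ c i =
      (∏ i, |(Q i).det| ^ c i)⁻¹ * ∏ i, (∫ y, f i y) ^ c i := by
    rw [← Finset.prod_inv_distrib, ← Finset.prod_mul_distrib]
    refine Finset.prod_congr rfl fun i _ => ?_
    rw [Real.mul_rpow (inv_nonneg.2 (hQpos i).le) (integral_nonneg (hf0 i)),
      Real.inv_rpow (hQpos i).le]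
  have h10 : A.det / ∏ i, ((B i * A * (B i)ᵀ).det) ^ (c i) =
      (|S.det| * (∏ i, |(Q i).det| ^ c i)⁻¹) ^ 2 := by
    have h11 : A.det = |S.det| ^ 2 := by rw [← hSA, det_mul, det_transpose, sq_abs, sq]
    have h12 : ∀ i, (B i * A * (B i)ᵀ).det ^ c i = (|(Q i).det| ^ c i) ^ 2 := by
      intro i
      rw [← hQ, det_mul, det_transpose, ← abs_mul_abs_self, Real.mul_rpow (abs_nonneg _)
        (abs_nonneg _), sq]
    simp_rw [h12]
    rw [h11, Finset.prod_pow, mul_pow, inv_pow, div_eq_mul_inv]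
  rw [h9, h10, Real.sqrt_sq, mul_assoc]
  exact mul_nonneg hSpos.le (inv_nonneg.2 (Finset.prod_nonneg fun i _ =>
    Real.rpow_nonneg (abs_nonneg _) _))
end

section
/- Let (c₁,B₁),…,(cₘ,Bₘ) be a Brascamp–Lieb datum on ℝⁿ satisfying the frame condition: Bᵢ Bᵢ* = id_{ℝ^{nᵢ}} for every i, and Σᵢ cᵢ Bᵢ* Bᵢ = id_{ℝⁿ}. Then for every collection of nonnegative integrable functions fᵢ : ℝ^{nᵢ} → ℝ one has ∫_{ℝⁿ} ∏ᵢ (fᵢ(Bᵢx))^{cᵢ} dx ≤ ∏ᵢ (∫_{ℝ^{nᵢ}} fᵢ dx)^{cᵢ}, i.e. the Brascamp–Lieb inequality holds with constant 1. -/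
open MeasureTheory Matrix

namespace BL
open ProbabilityTheory Real
open scoped InnerProductSpace

lemma log_le_cubic {r : ℝ} (hr : -1 < r) :
    Real.log (1 + r) ≤ r - r ^ 2 / 2 + r ^ 3 / 3 := by
  let g : ℝ → ℝ := fun r => r - r ^ 2 / 2 + r ^ 3 / 3 - Real.log (1 + r)
  have hd : ∀ x : ℝ, -1 < x → HasDerivAt g (x ^ 3 / (1 + x)) x := by
    intro x hx
    have h1 : (1 : ℝ) + x ≠ 0 := by linarith
    have := ((((hasDerivAt_id x).sub (((hasDerivAt_id x).pow 2).div_const 2)).add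
      (((hasDerivAt_id x).pow 3).div_const 3)).sub (((hasDerivAt_id x).const_add 1).log h1))
    refine this.congr_deriv ?_
    simp
    field_simp
    ring
  have h0 : g 0 = 0 := by simp [g]
  have key : 0 ≤ g r := by
    rcases le_total 0 r with h | h
    · have hm : MonotoneOn g (Set.Ici 0) := by
        apply monotoneOn_of_deriv_nonneg (convex_Ici 0)
        · intro x hx
          exact (hd x (by have := Set.mem_Ici.1 hx; linarith)).continuousAt.continuousWithinAt
        · intro x hx
          simp at hx
          exact (hd x (by linarith)).differentiableAt.differentiableWithinAt
        · intro x hx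
          simp at hx
          rw [(hd x (by linarith)).deriv]
          positivity
      have := hm (Set.mem_Ici.2 le_rfl) (Set.mem_Ici.2 h) h
      linarith
    · have hm : AntitoneOn g (Set.Ioc (-1) 0) := by
        apply antitoneOn_of_deriv_nonpos (convex_Ioc _ _)
        · intro x hx
          exact (hd x hx.1).continuousAt.continuousWithinAt
        · intro x hx
          simp at hx
          exact (hd x (by linarith)).differentiableAt.differentiableWithinAt
        · intro x hx
          simp at hx
          rw [(hd x (by linarith)).deriv]
          apply div_nonpos_of_nonpos_of_nonneg
          · have : x ^ 3 = x * x ^ 2 := by ring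
            rw [this]
            exact mul_nonpos_of_nonpos_of_nonneg hx.2.le (sq_nonneg x)
          · linarith
      have := hm ⟨hr, h⟩ ⟨by norm_num, le_rfl⟩ h
      linarith
  simp only [g] at key
  linarith

lemma log_lower {D r : ℝ} (hD : 1 ≤ D) (hr : 1 / D ≤ 1 + r) :
    r - D * r ^ 2 ≤ Real.log (1 + r) := by
  have hD0 : 0 < D := by linarith
  have h1 : 0 < 1 + r := lt_of_lt_of_le (by positivity) hr
  have h2 := Real.one_sub_inv_le_log_of_pos h1
  have h3 : (1 + r)⁻¹ ≤ D := by
    rw [inv_le_comm₀ h1 hD0]; simpa using hr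
  have h4 : 1 - (1 + r)⁻¹ = r - (1 + r)⁻¹ * r ^ 2 := by
    field_simp; ring
  have : (1 + r)⁻¹ * r ^ 2 ≤ D * r ^ 2 := by gcongr
  linarith

lemma exp_upper (s : ℝ) : Real.exp s ≤ 1 + s + s ^ 2 / 2 + |s| ^ 3 * Real.exp |s| := by
  have h := Complex.norm_exp_sub_sum_le_norm_mul_exp (s : ℂ) 3
  have h2 : (Complex.exp s - ∑ m ∈ Finset.range 3, (s : ℂ) ^ m / (m.factorial : ℂ))
      = ((Real.exp s - (1 + s + s ^ 2 / 2) : ℝ) : ℂ) := by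
    simp [Finset.sum_range_succ]
  rw [h2, Complex.norm_real, Complex.norm_real, Real.norm_eq_abs, Real.norm_eq_abs] at h
  have := le_abs_self (Real.exp s - (1 + s + s ^ 2 / 2))
  linarith

lemma scalar_upper {ι : Type*} [Fintype ι] (c : ι → ℝ) (hc : ∀ i, 0 ≤ c i) (D : ℝ)
    (hD : 1 ≤ D) : ∃ C : ℝ, 0 ≤ C ∧ ∀ (r l : ι → ℝ) (κ : ℝ), 0 ≤ κ →
      (∀ i, |r i| ≤ D * κ) → (∀ i, |l i| ≤ D * κ) → (∀ i, |r i - l i| ≤ D * κ ^ 2) →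
      (∀ i, 1 / D ≤ 1 + r i) → (∀ i, 1 + r i ≤ D) →
      ∏ i, (1 + r i) ^ (c i) ≤ 1 + ∑ i, c i * r i
        + ((∑ i, c i * l i) ^ 2 - ∑ i, c i * (l i) ^ 2) / 2 + C * κ ^ 3 := by
  set S := ∑ i, c i with hS
  have hS0 : 0 ≤ S := Finset.sum_nonneg fun i _ => hc i
  have hD0 : 0 < D := by linarith
  refine ⟨S * (D ^ 2 + D ^ 3) + 2 * S ^ 2 * D ^ 5 + S ^ 3 * D ^ 6 * Real.exp (S * D),
    by positivity, ?_⟩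
  intro r l κ hκ hr hl hrl hlo hhi
  have hpos : ∀ i, 0 < 1 + r i := fun i => lt_of_lt_of_le (by positivity) (hlo i)
  set s : ι → ℝ := fun i => Real.log (1 + r i) with hs
  have hprod : ∏ i, (1 + r i) ^ (c i) = Real.exp (∑ i, c i * s i) := by
    rw [Real.exp_sum]
    refine Finset.prod_congr rfl fun i _ => ?_
    rw [Real.rpow_def_of_pos (hpos i), mul_comm]
  have hr2 : ∀ i, r i ^ 2 ≤ D ^ 2 * κ ^ 2 := fun i => by
    rw [← sq_abs, ← mul_pow]; exact pow_le_pow_left₀ (abs_nonneg _) (hr i) 2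
  have hsup : ∀ i, s i ≤ r i := fun i => by
    have := Real.log_le_sub_one_of_pos (hpos i)
    simp only [hs]; linarith
  have hslo : ∀ i, r i - D * r i ^ 2 ≤ s i := fun i => log_lower hD (hlo i)
  have hsr : ∀ i, |s i - r i| ≤ D ^ 3 * κ ^ 2 := fun i => by
    have h1 := mul_le_mul_of_nonneg_left (hr2 i) hD0.le
    have h2 := hsup i
    have h3 := hslo i
    rw [abs_le]
    have : 0 ≤ D ^ 3 * κ ^ 2 := by positivity
    constructor <;> nlinarith
  have hsD : ∀ i, |s i| ≤ D := fun i => by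
    rw [abs_le]
    constructor
    · have := Real.one_sub_inv_le_log_of_pos (hpos i)
      have h3 : (1 + r i)⁻¹ ≤ D := by
        rw [inv_le_comm₀ (hpos i) hD0]; simpa using hlo i
      simp only [hs]; linarith
    · have := hsup i; have := hhi i; linarith
  have hsk : ∀ i, |s i| ≤ D ^ 2 * κ := fun i => by
    have hrD := hr i
    have h1 : D * κ ≤ D ^ 2 * κ := by
      apply mul_le_mul_of_nonneg_right _ hκ; nlinarith
    rw [abs_le] at hrD ⊢
    constructor
    · have h := Real.one_sub_inv_le_log_of_pos (hpos i)
      have h3 : (1 + r i)⁻¹ ≤ D := by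
        rw [inv_le_comm₀ (hpos i) hD0]; simpa using hlo i
      have h4 : 1 - (1 + r i)⁻¹ = (1 + r i)⁻¹ * r i := by
        have := (hpos i).ne'
        field_simp; ring
      have h5 : 0 < (1 + r i)⁻¹ := inv_pos.2 (hpos i)
      have h6 : -(D ^ 2 * κ) ≤ (1 + r i)⁻¹ * r i := by
        have : (1 + r i)⁻¹ * (-(D * κ)) ≤ (1 + r i)⁻¹ * r i :=
          mul_le_mul_of_nonneg_left hrD.1 h5.le
        have : (1 + r i)⁻¹ * (D * κ) ≤ D * (D * κ) :=
          mul_le_mul_of_nonneg_right h3 (by positivity)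
        nlinarith
      simp only [hs]; linarith
    · have := hsup i; linarith [hrD.2]
  have hsl : ∀ i, |s i - l i| ≤ 2 * D ^ 3 * κ ^ 2 := fun i => by
    have h1 : |s i - l i| ≤ |s i - r i| + |r i - l i| := by
      have := abs_add_le (s i - r i) (r i - l i); simpa using this
    have h2 : D * κ ^ 2 ≤ D ^ 3 * κ ^ 2 := by
      apply mul_le_mul_of_nonneg_right _ (sq_nonneg κ)
      nlinarith [mul_pos hD0 hD0]
    linarith [hsr i, hrl i]
  have hsum : ∀ (u : ι → ℝ) (b : ℝ), (∀ i, |u i| ≤ b) → |∑ i, c i * u i| ≤ S * b := by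
    intro u b hu
    rw [hS, Finset.sum_mul]
    refine (Finset.abs_sum_le_sum_abs _ _).trans (Finset.sum_le_sum fun i _ => ?_)
    rw [abs_mul, abs_of_nonneg (hc i)]
    exact mul_le_mul_of_nonneg_left (hu i) (hc i)
  set T := ∑ i, c i * s i with hT
  set L := ∑ i, c i * l i with hL
  have hT1 : |T| ≤ S * D := hsum s D hsD
  have hT2 : |T| ≤ S * (D ^ 2 * κ) := hsum s _ hsk
  have hL1 : |L| ≤ S * (D * κ) := hsum l _ hl
  have hTL : |T - L| ≤ S * (2 * D ^ 3 * κ ^ 2) := by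
    have := hsum (fun i => s i - l i) _ hsl
    have h2 : ∑ i, c i * (s i - l i) = T - L := by
      simp [hT, hL, mul_sub, Finset.sum_sub_distrib]
    rwa [h2] at this
  have hsq : T ^ 2 - L ^ 2 ≤ 4 * S ^ 2 * D ^ 5 * κ ^ 3 := by
    have h1 : T ^ 2 - L ^ 2 ≤ |T - L| * |T + L| := by
      rw [← abs_mul]; refine le_trans (le_of_eq ?_) (le_abs_self _); ring
    have h2 : |T + L| ≤ 2 * S * D ^ 2 * κ := by
      have := abs_add_le T L
      have h3 : S * (D * κ) ≤ S * (D ^ 2 * κ) := by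
        apply mul_le_mul_of_nonneg_left _ hS0
        apply mul_le_mul_of_nonneg_right _ hκ; nlinarith
      nlinarith
    calc _ ≤ |T - L| * |T + L| := h1
      _ ≤ (S * (2 * D ^ 3 * κ ^ 2)) * (2 * S * D ^ 2 * κ) := by gcongr
      _ = _ := by ring
  have hTs : T ≤ ∑ i, c i * r i - (∑ i, c i * l i ^ 2) / 2 + S * (D ^ 2 + D ^ 3) * κ ^ 3 := by
    have : ∀ i, s i ≤ r i - l i ^ 2 / 2 + (D ^ 2 + D ^ 3) * κ ^ 3 := fun i => by
      have h1 : s i ≤ r i - r i ^ 2 / 2 + r i ^ 3 / 3 := log_le_cubic (by linarith [hpos i])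
      have h2 : r i ^ 3 ≤ D ^ 3 * κ ^ 3 := by
        rw [← mul_pow]
        refine (le_abs_self _).trans ?_
        rw [abs_pow]; exact pow_le_pow_left₀ (abs_nonneg _) (hr i) 3
      have h3 : l i ^ 2 - r i ^ 2 ≤ (D * κ ^ 2) * (2 * (D * κ)) := by
        have h4 : l i ^ 2 - r i ^ 2 ≤ |r i - l i| * |r i + l i| := by
          rw [← abs_mul]; refine le_trans (le_of_eq ?_) (neg_le_abs _); ring
        refine h4.trans ?_
        have h5 : |r i + l i| ≤ 2 * (D * κ) := by
          have := abs_add_le (r i) (l i); linarith [hr i, hl i]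
        exact mul_le_mul (hrl i) h5 (abs_nonneg _) (by positivity)
      have h6 : 0 ≤ D ^ 3 * κ ^ 3 := by positivity
      nlinarith
    calc T ≤ ∑ i, c i * (r i - l i ^ 2 / 2 + (D ^ 2 + D ^ 3) * κ ^ 3) :=
          Finset.sum_le_sum fun i _ => mul_le_mul_of_nonneg_left (this i) (hc i)
      _ = _ := by
        rw [hS, Finset.sum_div, mul_assoc, Finset.sum_mul, ← Finset.sum_sub_distrib,
          ← Finset.sum_add_distrib]
        exact Finset.sum_congr rfl fun i _ => by ring
  have hE := exp_upper T
  have hE2 : |T| ^ 3 * Real.exp |T| ≤ S ^ 3 * D ^ 6 * Real.exp (S * D) * κ ^ 3 := by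
    calc _ ≤ (S * (D ^ 2 * κ)) ^ 3 * Real.exp (S * D) := by gcongr
      _ = _ := by ring
  rw [hprod]
  nlinarith

lemma scalar_lower {ι : Type*} [Fintype ι] (c : ι → ℝ) (hc : ∀ i, 0 ≤ c i) (D : ℝ)
    (hD : 1 ≤ D) (e : ι → ℝ) (q : ℝ) (hlo : ∀ i, 1 / D ≤ 1 + e i)
    (he : ∀ i, |e i| ≤ q) :
    Real.exp (∑ i, c i * e i - (∑ i, c i) * D * q ^ 2) ≤ ∏ i, (1 + e i) ^ (c i) := by
  have hD0 : 0 < D := by linarith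
  have hpos : ∀ i, 0 < 1 + e i := fun i => lt_of_lt_of_le (by positivity) (hlo i)
  have hprod : ∏ i, (1 + e i) ^ (c i) = Real.exp (∑ i, c i * Real.log (1 + e i)) := by
    rw [Real.exp_sum]
    refine Finset.prod_congr rfl fun i _ => ?_
    rw [Real.rpow_def_of_pos (hpos i), mul_comm]
  rw [hprod, Real.exp_le_exp, mul_assoc, Finset.sum_mul, ← Finset.sum_sub_distrib]
  refine Finset.sum_le_sum fun i _ => ?_
  rw [← mul_sub]
  refine mul_le_mul_of_nonneg_left ?_ (hc i)
  have h1 := log_lower hD (hlo i)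
  have h2 : e i ^ 2 ≤ q ^ 2 := by
    rw [← sq_abs]; exact pow_le_pow_left₀ (abs_nonneg _) (he i) 2
  nlinarith

end BL

namespace BL
open ProbabilityTheory Real
open scoped InnerProductSpace

section gauss
variable {E : Type*} [NormedAddCommGroup E] [InnerProductSpace ℝ E] [FiniteDimensional ℝ E]
  [MeasurableSpace E] [BorelSpace E]

lemma gauss_map {F : Type*} [NormedAddCommGroup F] [InnerProductSpace ℝ F]
    [FiniteDimensional ℝ F] [MeasurableSpace F] [BorelSpace F] (b : E →L[ℝ] F)
    (hb : ∀ w, ‖ContinuousLinearMap.adjoint b w‖ = ‖w‖) :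
    (stdGaussian E).map b = stdGaussian F := by
  have : IsProbabilityMeasure ((stdGaussian E).map b) :=
    Measure.isProbabilityMeasure_map (by fun_prop)
  apply Measure.ext_of_charFun
  ext t
  rw [charFun_stdGaussian, charFun_apply, integral_map (by fun_prop) (by fun_prop)]
  have := charFun_stdGaussian (ContinuousLinearMap.adjoint b t)
  rw [charFun_apply, hb] at this
  rw [← this]
  simp_rw [ContinuousLinearMap.adjoint_inner_right]

lemma gauss_semigroup (σ τ ρ : ℝ) (h : ρ ^ 2 = σ ^ 2 + τ ^ 2) (G : E → ℝ) (hG : Measurable G)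
    (M : ℝ) (hM : ∀ x, |G x| ≤ M) (x : E) :
    ∫ z, G (x + ρ • z) ∂(stdGaussian E)
      = ∫ w, ∫ z, G (x + σ • w + τ • z) ∂(stdGaussian E) ∂(stdGaussian E) := by
  set γ := stdGaussian E
  have hp : ∀ s : ℝ, IsProbabilityMeasure (γ.map (s • ·)) := fun s =>
    Measure.isProbabilityMeasure_map (by fun_prop)
  have hm : γ.map (ρ • ·) = (γ.map (σ • ·)) ∗ (γ.map (τ • ·)) := by
    apply Measure.ext_of_charFun
    ext t
    rw [charFun_conv, charFun_map_smul, charFun_map_smul, charFun_map_smul, charFun_stdGaussian,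
      charFun_stdGaussian, charFun_stdGaussian, ← Complex.exp_add]
    congr 1
    simp only [norm_smul, mul_pow, Complex.ofReal_mul, Real.norm_eq_abs]
    norm_cast
    rw [sq_abs, sq_abs, sq_abs, h]
    push_cast
    ring
  have h1 : ∫ z, G (x + ρ • z) ∂γ = ∫ y, G (x + y) ∂(γ.map (ρ • ·)) := by
    rw [integral_map (by fun_prop)]
    exact (hG.comp (measurable_const_add x)).aestronglyMeasurable
  have hG' : Measurable fun y => G (x + y) := hG.comp (measurable_const_add x)
  rw [h1, hm, integral_conv]
  · rw [integral_map (by fun_prop)]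
    · congr 1
      ext w
      rw [integral_map (by fun_prop)]
      · simp only [add_assoc]
      · exact (hG.comp (measurable_const_add x |>.comp (measurable_const_add _))).aestronglyMeasurable
    · apply Measurable.aestronglyMeasurable
      apply StronglyMeasurable.measurable
      apply StronglyMeasurable.integral_prod_right
      apply Measurable.stronglyMeasurable
      exact hG'.comp measurable_add
  · exact Integrable.of_bound hG'.aestronglyMeasurable M (Filter.Eventually.of_forall fun y => hM _)

lemma gauss_mean (v : E) : ∫ z, ⟪v, z⟫_ℝ ∂(stdGaussian E) = 0 :=
  integral_strongDual_stdGaussian (innerSL ℝ v)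

lemma gauss_norm_int (k : ℕ) : Integrable (fun z : E => ‖z‖ ^ k) (stdGaussian E) := by
  have := IsGaussian.memLp_id (stdGaussian E) (k : ENNReal) (by simp)
  exact this.integrable_norm_pow'

lemma gauss_int_inner (v : E) : Integrable (fun z : E => ⟪v, z⟫_ℝ) (stdGaussian E) := by
  have h := (gauss_norm_int (E := E) 1).const_mul ‖v‖
  refine h.mono' (by fun_prop) (Filter.Eventually.of_forall fun z => ?_)
  simpa using abs_real_inner_le_norm v z

lemma gauss_int_inner_sq (v : E) : Integrable (fun z : E => ⟪v, z⟫_ℝ ^ 2) (stdGaussian E) := by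
  have h := (gauss_norm_int (E := E) 2).const_mul (‖v‖ ^ 2)
  refine h.mono' (by fun_prop) (Filter.Eventually.of_forall fun z => ?_)
  rw [Real.norm_eq_abs, abs_pow, ← mul_pow]
  exact pow_le_pow_left₀ (abs_nonneg _) (abs_real_inner_le_norm v z) 2

lemma gauss_var (v : E) : ∫ z, ⟪v, z⟫_ℝ ^ 2 ∂(stdGaussian E) = ‖v‖ ^ 2 := by
  have h := variance_dual_stdGaussian (innerSL ℝ v)
  rw [variance_eq_integral (by fun_prop), integral_strongDual_stdGaussian] at h
  simpa using h

end gauss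
end BL

namespace BL
open ProbabilityTheory Real
open scoped InnerProductSpace

section step
variable {E : Type*} [NormedAddCommGroup E] [InnerProductSpace ℝ E] [FiniteDimensional ℝ E]
  [MeasurableSpace E] [BorelSpace E]

/-- Bounded functions with a uniform first order expansion along `b`. -/
structure Nice {F : Type*} [NormedAddCommGroup F] [InnerProductSpace ℝ F]
    [FiniteDimensional ℝ F] [MeasurableSpace F] [BorelSpace F]
    (b : E →L[ℝ] F) (A δ M : ℝ) (G : E → ℝ) (l : E → F) : Prop where
  meas : Measurable G
  measl : Measurable l
  lo : ∀ x, δ ≤ G x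
  hi : ∀ x, G x ≤ M
  lb : ∀ x, ‖l x‖ ≤ A
  lip : ∀ x h, |G (x + h) - G x| ≤ A * ‖h‖
  tay : ∀ x h, |G (x + h) - G x - ⟪l x, b h⟫_ℝ| ≤ A * ‖h‖ ^ 2

section
variable {F : Type*} [NormedAddCommGroup F] [InnerProductSpace ℝ F]
    [FiniteDimensional ℝ F] [MeasurableSpace F] [BorelSpace F]
    {b : E →L[ℝ] F} {A δ M : ℝ} {G : E → ℝ} {l : E → F}

lemma Nice.int (hδ : 0 < δ) (h : Nice b A δ M G l) (x : E) (σ : ℝ) :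
    Integrable (fun z => G (x + σ • z)) (stdGaussian E) := by
  refine Integrable.of_bound (C := M) (h.meas.comp (by fun_prop)).aestronglyMeasurable
    (Filter.Eventually.of_forall fun z => ?_)
  rw [Real.norm_eq_abs, abs_of_nonneg (hδ.le.trans (h.lo _))]
  exact h.hi _

lemma Nice.intl (h : Nice b A δ M G l) (x : E) (σ : ℝ) :
    Integrable (fun z => l (x + σ • z)) (stdGaussian E) :=
  Integrable.of_bound (C := A) (h.measl.comp (by fun_prop)).aestronglyMeasurable
    (Filter.Eventually.of_forall fun z => h.lb _)

lemma avg_abs_le {g : E → ℝ} {K : ℝ} (h : ∀ z, |g z| ≤ K) :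
    |∫ z, g z ∂(stdGaussian E)| ≤ K := by
  have := norm_integral_le_of_norm_le_const (μ := stdGaussian E) (f := g) (C := K)
    (Filter.Eventually.of_forall h)
  simpa using this

lemma Nice.smooth (hδ : 0 < δ) (h : Nice b A δ M G l) (σ : ℝ) :
    Nice b A δ M (fun x => ∫ z, G (x + σ • z) ∂(stdGaussian E))
      (fun x => ∫ z, l (x + σ • z) ∂(stdGaussian E)) where
  meas := by
    apply StronglyMeasurable.measurable
    apply StronglyMeasurable.integral_prod_right (f := fun x z => G (x + σ • z))
    apply Measurable.stronglyMeasurable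
    exact h.meas.comp (by fun_prop)
  measl := by
    apply StronglyMeasurable.measurable
    apply StronglyMeasurable.integral_prod_right (f := fun x z => l (x + σ • z))
    apply Measurable.stronglyMeasurable
    exact h.measl.comp (by fun_prop)
  lo x := by
    have := integral_mono (μ := stdGaussian E) (integrable_const δ) (h.int hδ x σ)
      (fun z => h.lo _)
    simpa using this
  hi x := by
    have := integral_mono (μ := stdGaussian E) (h.int hδ x σ) (integrable_const M)
      (fun z => h.hi _)
    simpa using this
  lb x := by
    have := norm_integral_le_of_norm_le_const (μ := stdGaussian E)
      (Filter.Eventually.of_forall fun z => h.lb (x + σ • z))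
    simpa using this
  lip x k := by
    rw [← integral_sub (h.int hδ _ σ) (h.int hδ _ σ)]
    refine avg_abs_le fun z => ?_
    have := h.lip (x + σ • z) k
    rwa [add_right_comm] at this
  tay x k := by
    have h1 : ⟪∫ z, l (x + σ • z) ∂(stdGaussian E), b k⟫_ℝ
        = ∫ z, ⟪l (x + σ • z), b k⟫_ℝ ∂(stdGaussian E) := by
      rw [real_inner_comm, ← integral_inner (h.intl x σ)]
      simp_rw [real_inner_comm]
    rw [h1, ← integral_sub (h.int hδ _ σ) (h.int hδ _ σ), ← integral_sub]
    · refine avg_abs_le fun z => ?_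
      have := h.tay (x + σ • z) k
      rwa [add_right_comm] at this
    · exact (h.int hδ _ σ).sub (h.int hδ _ σ)
    · exact (h.intl x σ).inner_const (b k)

end

variable {ι : Type*} [Fintype ι] {F : ι → Type*} [∀ i, NormedAddCommGroup (F i)]
  [∀ i, InnerProductSpace ℝ (F i)] [∀ i, FiniteDimensional ℝ (F i)]
  [∀ i, MeasurableSpace (F i)] [∀ i, BorelSpace (F i)]

lemma step (b : ∀ i, E →L[ℝ] F i) (c : ι → ℝ) (hc : ∀ i, 0 ≤ c i)
    (hadj : ∀ i w, ‖ContinuousLinearMap.adjoint (b i) w‖ = ‖w‖)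
    (hfr : ∀ w : ∀ i, F i, ‖∑ i, c i • ContinuousLinearMap.adjoint (b i) (w i)‖ ^ 2
      ≤ ∑ i, c i * ‖w i‖ ^ 2)
    (A δ M : ℝ) (hδ : 0 < δ) :
    ∃ C : ℝ, 0 ≤ C ∧ ∀ σ : ℝ, 0 ≤ σ → σ ≤ 1 → ∀ (G : ι → E → ℝ) (l : ∀ i, E → F i),
      (∀ i, Nice (b i) A δ M (G i) (l i)) → ∀ x,
      ∫ z, ∏ i, (G i (x + σ • z)) ^ (c i) ∂(stdGaussian E) ≤ Real.exp (C * σ ^ 3) *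
        ∏ i, (∫ z, G i (x + σ • z) ∂(stdGaussian E)) ^ (c i) := by
  set γ := stdGaussian E with hγ
  set D := 1 + |A| / δ + |M| / δ with hD
  have hD1 : 1 ≤ D := by
    have : 0 ≤ |A| / δ := by positivity
    have : 0 ≤ |M| / δ := by positivity
    linarith
  have hD0 : 0 < D := by linarith
  have hDA : |A| / δ ≤ D := by
    have : 0 ≤ |M| / δ := by positivity
    linarith
  have hDM : |M| / δ ≤ D := by
    have : 0 ≤ |A| / δ := by positivity
    linarith
  obtain ⟨C0, hC0, hup⟩ := scalar_upper c hc D hD1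
  set m2 := ∫ z, ‖z‖ ^ 2 ∂γ with hm2
  set m3 := ∫ z, ‖z‖ ^ 3 ∂γ with hm3
  set S := ∑ i, c i with hS
  have hS0 : 0 ≤ S := Finset.sum_nonneg fun i _ => hc i
  have hm20 : 0 ≤ m2 := integral_nonneg fun z => by positivity
  have hm30 : 0 ≤ m3 := integral_nonneg fun z => by positivity
  refine ⟨C0 * m3 + S * D ^ 3 * m2 ^ 2, by positivity, ?_⟩
  intro σ hσ0 hσ1 G l hN x
  set a : ι → ℝ := fun i => G i x with ha
  have ha0 : ∀ i, 0 < a i := fun i => hδ.trans_le ((hN i).lo x)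
  set r : ι → E → ℝ := fun i z => G i (x + σ • z) / a i - 1 with hr
  set w : ∀ i, F i := fun i => (a i)⁻¹ • l i x with hw
  set v : ι → E := fun i => ContinuousLinearMap.adjoint (b i) (w i) with hv
  have hGr : ∀ i z, G i (x + σ • z) = a i * (1 + r i z) := fun i z => by
    have := (ha0 i).ne'
    simp only [hr]; field_simp; ring
  have hlo : ∀ i z, 1 / D ≤ 1 + r i z := fun i z => by
    have h1 : 1 + r i z = G i (x + σ • z) / a i := by simp [hr]
    have hM := (hN i).hi x
    have hM0 : 0 < M := (ha0 i).trans_le hM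
    rw [abs_of_pos hM0] at hDM
    rw [h1, div_le_div_iff₀ hD0 (ha0 i), one_mul]
    calc a i ≤ M := hM
      _ ≤ D * δ := by rwa [div_le_iff₀ hδ] at hDM
      _ ≤ G i (x + σ • z) * D := by rw [mul_comm]; gcongr; exact (hN i).lo _
  have hhi : ∀ i z, 1 + r i z ≤ D := fun i z => by
    have h1 : 1 + r i z = G i (x + σ • z) / a i := by simp [hr]
    have hM := (hN i).hi x
    have hM0 : 0 < M := (ha0 i).trans_le hM
    rw [abs_of_pos hM0] at hDM
    rw [h1]
    refine le_trans ?_ hDM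
    exact div_le_div₀ hM0.le ((hN i).hi _) hδ ((hN i).lo x)
  have hA0 : ∀ i : ι, 0 ≤ A := fun i => (norm_nonneg _).trans ((hN i).lb x)
  have hAa : ∀ i, A / a i ≤ D := fun i => by
    refine le_trans ?_ hDA
    rw [abs_of_nonneg (hA0 i)]
    exact div_le_div_of_nonneg_left (hA0 i) hδ ((hN i).lo x)
  have hnz : ∀ z : E, ‖σ • z‖ = σ * ‖z‖ := fun z => by
    rw [norm_smul, Real.norm_eq_abs, abs_of_nonneg hσ0]
  have hinn : ∀ i z, σ * ⟪v i, z⟫_ℝ = ⟪l i x, b i (σ • z)⟫_ℝ / a i := fun i z => by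
    simp only [hv, hw]
    rw [ContinuousLinearMap.adjoint_inner_left, real_inner_smul_left, map_smul,
      real_inner_smul_right]
    field_simp
  have hrb : ∀ i z, |r i z| ≤ D * (σ * ‖z‖) := fun i z => by
    have h1 : r i z = (G i (x + σ • z) - G i x) / a i := by
      have := (ha0 i).ne'
      simp only [hr]; field_simp; simp [ha]
    rw [h1, abs_div, abs_of_pos (ha0 i), ← hnz]
    calc _ ≤ A * ‖σ • z‖ / a i := by
          have := (ha0 i).le
          gcongr; exact (hN i).lip _ _
      _ = A / a i * ‖σ • z‖ := by ring
      _ ≤ _ := by gcongr; exact hAa i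
  have hrl : ∀ i z, |r i z - σ * ⟪v i, z⟫_ℝ| ≤ D * (σ * ‖z‖) ^ 2 := fun i z => by
    have h1 : r i z - σ * ⟪v i, z⟫_ℝ
        = (G i (x + σ • z) - G i x - ⟪l i x, b i (σ • z)⟫_ℝ) / a i := by
      rw [hinn]
      have := (ha0 i).ne'
      simp only [hr]; field_simp; simp [ha]
    rw [h1, abs_div, abs_of_pos (ha0 i), ← hnz]
    calc _ ≤ A * ‖σ • z‖ ^ 2 / a i := by
          have := (ha0 i).le
          gcongr; exact (hN i).tay _ _
      _ = A / a i * ‖σ • z‖ ^ 2 := by ring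
      _ ≤ _ := by gcongr; exact hAa i
  have hwn : ∀ i, ‖v i‖ ≤ D := fun i => by
    simp only [hv, hw]
    rw [hadj, norm_smul, norm_inv, Real.norm_eq_abs, abs_of_pos (ha0 i)]
    refine le_trans ?_ (hAa i)
    rw [inv_mul_eq_div]
    have := (ha0 i).le
    gcongr
    exact (hN i).lb x
  have hlb : ∀ i z, |σ * ⟪v i, z⟫_ℝ| ≤ D * (σ * ‖z‖) := fun i z => by
    rw [abs_mul, abs_of_nonneg hσ0]
    calc _ ≤ σ * (‖v i‖ * ‖z‖) := by gcongr; exact abs_real_inner_le_norm _ _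
      _ ≤ σ * (D * ‖z‖) := by gcongr; exact hwn i
      _ = _ := by ring
  have hrint : ∀ i, Integrable (r i) γ := fun i =>
    (((hN i).int hδ x σ).div_const _).sub (integrable_const 1)
  set e : ι → ℝ := fun i => ∫ z, r i z ∂γ with he
  have hGe : ∀ i, ∫ z, G i (x + σ • z) ∂γ = a i * (1 + e i) := fun i => by
    simp_rw [hGr i]
    rw [integral_const_mul, integral_add (integrable_const 1) (hrint i)]
    simp [he]
  have hint_l : ∀ i, Integrable (fun z => σ * ⟪v i, z⟫_ℝ) γ := fun i =>
    (gauss_int_inner (v i)).const_mul σ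
  set q := D * σ ^ 2 * m2 with hq
  have heq : ∀ i, |e i| ≤ q := fun i => by
    have h1 : e i = ∫ z, (r i z - σ * ⟪v i, z⟫_ℝ) ∂γ := by
      rw [integral_sub (hrint i) (hint_l i), integral_const_mul, gauss_mean]
      simp [he]
    rw [h1]
    have h2 : q = ∫ z, D * (σ * ‖z‖) ^ 2 ∂γ := by
      simp_rw [mul_pow]
      rw [integral_const_mul, integral_const_mul, hq, hm2]; ring
    rw [h2]
    refine (abs_integral_le_integral_abs).trans ?_
    refine integral_mono ((hrint i).sub (hint_l i)).abs ?_ (hrl i)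
    simp_rw [mul_pow]
    exact ((gauss_norm_int 2).const_mul _).const_mul _
  have helo : ∀ i, 1 / D ≤ 1 + e i := fun i => by
    have := integral_mono (μ := γ) (integrable_const (1 / D))
      ((integrable_const (1 : ℝ)).add (hrint i)) (hlo i)
    simp only [Pi.add_apply] at this
    rw [integral_add (integrable_const 1) (hrint i)] at this
    simpa [he] using this
  have hlow := scalar_lower c hc D hD1 e q helo heq
  -- the upper bound
  have hsumv : ∀ z, ∑ i, c i * (σ * ⟪v i, z⟫_ℝ) = σ * ⟪∑ i, c i • v i, z⟫_ℝ := fun z => by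
    rw [sum_inner, Finset.mul_sum]
    refine Finset.sum_congr rfl fun i _ => ?_
    rw [real_inner_smul_left]; ring
  have hI1 : Integrable (fun z => ∑ i, c i * r i z) γ :=
    integrable_finsetSum _ fun i _ => (hrint i).const_mul _
  have hI2 : Integrable (fun z => (∑ i, c i * (σ * ⟪v i, z⟫_ℝ)) ^ 2) γ := by
    simp_rw [hsumv, mul_pow]
    exact (gauss_int_inner_sq _).const_mul _
  have hI3 : Integrable (fun z => ∑ i, c i * (σ * ⟪v i, z⟫_ℝ) ^ 2) γ := by
    simp_rw [mul_pow]
    exact integrable_finsetSum _ fun i _ => ((gauss_int_inner_sq _).const_mul _).const_mul _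
  have hI4 : Integrable (fun z : E => C0 * (σ * ‖z‖) ^ 3) γ := by
    simp_rw [mul_pow]
    exact ((gauss_norm_int 3).const_mul _).const_mul _
  have hI0 : Integrable (fun z => 1 + ∑ i, c i * r i z) γ := (integrable_const 1).add hI1
  have hI23 : Integrable (fun z => ((∑ i, c i * (σ * ⟪v i, z⟫_ℝ)) ^ 2 -
      ∑ i, c i * (σ * ⟪v i, z⟫_ℝ) ^ 2) / 2) γ := (hI2.sub hI3).div_const 2
  have hupper : ∫ z, ∏ i, (1 + r i z) ^ (c i) ∂γ ≤ Real.exp (∑ i, c i * e i + C0 * m3 * σ ^ 3) := by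
    have hmono : ∫ z, ∏ i, (1 + r i z) ^ (c i) ∂γ ≤ ∫ z, (1 + ∑ i, c i * r i z
        + ((∑ i, c i * (σ * ⟪v i, z⟫_ℝ)) ^ 2 - ∑ i, c i * (σ * ⟪v i, z⟫_ℝ) ^ 2) / 2
        + C0 * (σ * ‖z‖) ^ 3) ∂γ := by
      refine integral_mono_of_nonneg (Filter.Eventually.of_forall fun z => ?_)
        ((hI0.add hI23).add hI4)
        (Filter.Eventually.of_forall fun z => ?_)
      · refine Finset.prod_nonneg fun i _ => Real.rpow_nonneg ?_ _
        exact le_trans (by positivity) (hlo i z)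
      · exact hup (fun i => r i z) (fun i => σ * ⟪v i, z⟫_ℝ) (σ * ‖z‖) (by positivity)
          (fun i => hrb i z) (fun i => hlb i z) (fun i => hrl i z) (fun i => hlo i z)
          (fun i => hhi i z)
    refine hmono.trans ?_
    have hv2 : ‖∑ i, c i • v i‖ ^ 2 ≤ ∑ i, c i * ‖v i‖ ^ 2 := by
      have := hfr w
      simp only [hv, hadj]
      exact this
    have hI023 : Integrable (fun z => 1 + ∑ i, c i * r i z +
      ((∑ i, c i * (σ * ⟪v i, z⟫_ℝ)) ^ 2 - ∑ i, c i * (σ * ⟪v i, z⟫_ℝ) ^ 2) / 2) γ :=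
      hI0.add hI23
    have hI5 : ∀ i ∈ (Finset.univ : Finset ι),
        Integrable (fun z => c i * (σ * ⟪v i, z⟫_ℝ) ^ 2) γ := fun i _ => by
      simp_rw [mul_pow]
      exact ((gauss_int_inner_sq _).const_mul _).const_mul _
    rw [integral_add hI023 hI4, integral_add hI0 hI23,
      integral_add (integrable_const 1) hI1, integral_div, integral_sub hI2 hI3,
      integral_finsetSum _ (fun i _ => (hrint i).const_mul _),
      integral_finsetSum _ hI5]
    have hgv : ∀ u : E, ∫ z, ⟪u, z⟫_ℝ ^ 2 ∂γ = ‖u‖ ^ 2 := fun u => gauss_var u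
    simp_rw [hsumv, mul_pow, integral_const_mul, hgv]
    have h5 : ∑ i, c i * (σ ^ 2 * ‖v i‖ ^ 2) = σ ^ 2 * ∑ i, c i * ‖v i‖ ^ 2 := by
      rw [Finset.mul_sum]; exact Finset.sum_congr rfl fun i _ => by ring
    rw [h5]
    have h6 := mul_le_mul_of_nonneg_left hv2 (sq_nonneg σ)
    have h7 := Real.add_one_le_exp (∑ i, c i * e i + C0 * m3 * σ ^ 3)
    have h8 : ∫ _ : E, (1 : ℝ) ∂γ = 1 := by simp
    rw [h8]
    simp only [he, hm3] at h7 ⊢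
    linarith
  have hq2 : S * D * q ^ 2 ≤ S * D ^ 3 * m2 ^ 2 * σ ^ 3 := by
    have h1 : S * D * q ^ 2 = S * D ^ 3 * m2 ^ 2 * (σ ^ 3 * σ) := by rw [hq]; ring
    rw [h1]
    apply mul_le_mul_of_nonneg_left _ (by positivity)
    exact mul_le_of_le_one_right (by positivity) hσ1
  have hmain : ∫ z, ∏ i, (1 + r i z) ^ (c i) ∂γ ≤
      Real.exp ((C0 * m3 + S * D ^ 3 * m2 ^ 2) * σ ^ 3) * ∏ i, (1 + e i) ^ (c i) := by
    refine hupper.trans ?_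
    refine le_trans ?_ (mul_le_mul_of_nonneg_left hlow (Real.exp_nonneg _))
    rw [← Real.exp_add, Real.exp_le_exp]
    nlinarith
  have hL : ∀ z, ∏ i, (G i (x + σ • z)) ^ (c i)
      = (∏ i, (a i) ^ (c i)) * ∏ i, (1 + r i z) ^ (c i) := fun z => by
    rw [← Finset.prod_mul_distrib]
    refine Finset.prod_congr rfl fun i _ => ?_
    rw [hGr, Real.mul_rpow (ha0 i).le (le_trans (by positivity) (hlo i z))]
  have hR : ∏ i, (∫ z, G i (x + σ • z) ∂γ) ^ (c i)
      = (∏ i, (a i) ^ (c i)) * ∏ i, (1 + e i) ^ (c i) := by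
    rw [← Finset.prod_mul_distrib]
    refine Finset.prod_congr rfl fun i _ => ?_
    rw [hGe, Real.mul_rpow (ha0 i).le (le_trans (by positivity) (helo i))]
  simp_rw [hL]
  rw [hR, integral_const_mul, mul_left_comm]
  exact mul_le_mul_of_nonneg_left hmain
    (Finset.prod_nonneg fun i _ => Real.rpow_nonneg (ha0 i).le _)

end step
end BL

namespace BL
open ProbabilityTheory Real
open scoped InnerProductSpace

section iter
variable {E : Type*} [NormedAddCommGroup E] [InnerProductSpace ℝ E] [FiniteDimensional ℝ E]
  [MeasurableSpace E] [BorelSpace E]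
variable {ι : Type*} [Fintype ι] {F : ι → Type*} [∀ i, NormedAddCommGroup (F i)]
  [∀ i, InnerProductSpace ℝ (F i)] [∀ i, FiniteDimensional ℝ (F i)]
  [∀ i, MeasurableSpace (F i)] [∀ i, BorelSpace (F i)]

lemma gauss_nice (b : ∀ i, E →L[ℝ] F i) (c : ι → ℝ) (hc : ∀ i, 0 ≤ c i)
    (hadj : ∀ i w, ‖ContinuousLinearMap.adjoint (b i) w‖ = ‖w‖)
    (hfr : ∀ w : ∀ i, F i, ‖∑ i, c i • ContinuousLinearMap.adjoint (b i) (w i)‖ ^ 2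
      ≤ ∑ i, c i * ‖w i‖ ^ 2)
    (A δ M : ℝ) (hδ : 0 < δ) (G : ι → E → ℝ) (l : ∀ i, E → F i)
    (hN : ∀ i, Nice (b i) A δ M (G i) (l i)) :
    ∫ z, ∏ i, (G i z) ^ (c i) ∂(stdGaussian E) ≤
        ∏ i, (∫ z, G i z ∂(stdGaussian E)) ^ (c i) := by
  set γ := stdGaussian E with hγ
  obtain ⟨C, hC, hstep⟩ := step b c hc hadj hfr A δ M hδ
  have hpm : ∀ (G : ι → E → ℝ) (l : ∀ i, E → F i), (∀ i, Nice (b i) A δ M (G i) (l i)) →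
      Measurable (fun x => ∏ i, (G i x) ^ (c i)) := fun G l hN =>
    Finset.measurable_prod _ fun i _ => (hN i).meas.pow_const _
  have hpb : ∀ (G : ι → E → ℝ) (l : ∀ i, E → F i), (∀ i, Nice (b i) A δ M (G i) (l i)) →
      ∀ x, |∏ i, (G i x) ^ (c i)| ≤ ∏ i : ι, M ^ (c i) := fun G l hN x => by
    rw [Finset.abs_prod]
    refine Finset.prod_le_prod (fun i _ => abs_nonneg _) fun i _ => ?_
    have h0 : 0 ≤ G i x := hδ.le.trans ((hN i).lo x)
    rw [abs_of_nonneg (Real.rpow_nonneg h0 _)]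
    exact Real.rpow_le_rpow h0 ((hN i).hi x) (hc i)
  have hiter : ∀ (σ : ℝ), 0 ≤ σ → σ ≤ 1 → ∀ (N : ℕ) (G : ι → E → ℝ) (l : ∀ i, E → F i),
      (∀ i, Nice (b i) A δ M (G i) (l i)) → ∀ x,
      ∫ z, ∏ i, (G i (x + (σ * √N) • z)) ^ (c i) ∂γ ≤ Real.exp (N * (C * σ ^ 3)) *
        ∏ i, (∫ z, G i (x + (σ * √N) • z) ∂γ) ^ (c i) := by
    intro σ hσ0 hσ1 N
    induction N with
    | zero => intro G l hN x; simp
    | succ N ih =>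
      intro G l hN x
      have hsq : (σ * √((N + 1 : ℕ) : ℝ)) ^ 2 = (σ * √N) ^ 2 + σ ^ 2 := by
        rw [mul_pow, mul_pow, Real.sq_sqrt (by positivity), Real.sq_sqrt (by positivity)]
        push_cast; ring
      rw [gauss_semigroup _ _ _ hsq (fun x => ∏ i, (G i x) ^ (c i)) (hpm G l hN) _
        (hpb G l hN) x]
      have hGs : ∀ i, ∫ z, G i (x + (σ * √((N + 1 : ℕ) : ℝ)) • z) ∂γ
          = ∫ w, ∫ z, G i (x + (σ * √N) • w + σ • z) ∂γ ∂γ := fun i =>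
        gauss_semigroup _ _ _ hsq (G i) (hN i).meas M (fun x => by
          rw [abs_of_nonneg (hδ.le.trans ((hN i).lo x))]; exact (hN i).hi x) x
      simp_rw [hGs]
      have hN' := fun i => (hN i).smooth hδ σ
      have h1 := ih _ _ hN' x
      have h2 : ∫ w, ∫ z, ∏ i, (G i (x + (σ * √N) • w + σ • z)) ^ (c i) ∂γ ∂γ
          ≤ ∫ w, Real.exp (C * σ ^ 3) *
            ∏ i, (∫ z, G i (x + (σ * √N) • w + σ • z) ∂γ) ^ (c i) ∂γ := by
        refine integral_mono_of_nonneg (Filter.Eventually.of_forall fun w => ?_) ?_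
          (Filter.Eventually.of_forall fun w => ?_)
        · refine integral_nonneg fun z => Finset.prod_nonneg fun i _ => Real.rpow_nonneg ?_ _
          exact hδ.le.trans ((hN i).lo _)
        · refine Integrable.const_mul ?_ _
          refine Integrable.of_bound (C := ∏ i : ι, M ^ (c i)) ?_
            (Filter.Eventually.of_forall fun w => hpb _ _ hN' (x + (σ * √N) • w))
          exact ((hpm _ _ hN').comp (f := fun w => x + (σ * √N) • w)
            (by fun_prop)).aestronglyMeasurable
        · exact hstep σ hσ0 hσ1 G l hN (x + (σ * √N) • w)
      refine h2.trans ?_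
      rw [integral_const_mul]
      refine (mul_le_mul_of_nonneg_left h1 (Real.exp_nonneg _)).trans (le_of_eq ?_)
      rw [← mul_assoc, ← Real.exp_add]
      congr 2
      push_cast; ring
  have hfin : ∀ N : ℕ, 0 < N → ∫ z, ∏ i, (G i z) ^ (c i) ∂γ ≤
      Real.exp (C * (1 / √N)) * ∏ i, (∫ z, G i z ∂γ) ^ (c i) := by
    intro N hNp
    have hN1 : (1 : ℝ) ≤ √N := by
      rw [Real.one_le_sqrt]; exact_mod_cast hNp
    have hN0 : (0 : ℝ) < √N := by linarith
    have h := hiter (1 / √N) (by positivity) (by rw [div_le_one hN0]; exact hN1) N G l hN 0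
    have h1 : 1 / √(N : ℝ) * √N = 1 := by field_simp
    have h2 : (N : ℝ) * (C * (1 / √N) ^ 3) = C * (1 / √N) := by
      have : (N : ℝ) = √N ^ 2 := (Real.sq_sqrt (by positivity)).symm
      nth_rewrite 1 [this]
      field_simp
    rw [h1, h2] at h
    simpa using h
  have hlim : Filter.Tendsto (fun N : ℕ => Real.exp (C * (1 / √(N : ℝ))) *
      ∏ i, (∫ z, G i z ∂γ) ^ (c i)) Filter.atTop
      (nhds (Real.exp (C * 0) * ∏ i, (∫ z, G i z ∂γ) ^ (c i))) := by
    refine Filter.Tendsto.mul_const _ ?_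
    refine (Real.continuous_exp.tendsto _).comp ?_
    refine Filter.Tendsto.const_mul _ ?_
    simp_rw [one_div]
    exact tendsto_inv_atTop_zero.comp (Real.tendsto_sqrt_atTop.comp tendsto_natCast_atTop_atTop)
  have := ge_of_tendsto hlim (Filter.eventually_atTop.2 ⟨1, fun N hN => hfin N hN⟩)
  simpa using this

end iter
end BL

namespace BL
open ProbabilityTheory Real
open scoped InnerProductSpace

set_option linter.unusedSectionVars false

section approx
variable {E : Type*} [NormedAddCommGroup E] [InnerProductSpace ℝ E] [FiniteDimensional ℝ E]
  [MeasurableSpace E] [BorelSpace E]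

section
variable {F : Type*} [NormedAddCommGroup F] [InnerProductSpace ℝ F]
    [FiniteDimensional ℝ F] [MeasurableSpace F] [BorelSpace F]

lemma Nice.mono {b : E →L[ℝ] F} {A δ M A' M' : ℝ} {G : E → ℝ} {l : E → F}
    (h : Nice b A δ M G l) (hA : A ≤ A') (hM : M ≤ M') : Nice b A' δ M' G l where
  meas := h.meas
  measl := h.measl
  lo := h.lo
  hi x := (h.hi x).trans hM
  lb x := (h.lb x).trans hA
  lip x k := (h.lip x k).trans (by gcongr)
  tay x k := (h.tay x k).trans (by gcongr)

lemma nice_of_smooth (b : E →L[ℝ] F) (hb : ∀ x, ‖b x‖ ≤ ‖x‖) (u : F → ℝ)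
    (hu : ContDiff ℝ (⊤ : ℕ∞) u) (hcs : HasCompactSupport u) (hu0 : ∀ y, 0 ≤ u y) (δ : ℝ) :
    ∃ A M l, Nice b A δ M (fun x => δ + u (b x)) l := by
  obtain ⟨K1, hK1⟩ := hu.lipschitzWith_of_hasCompactSupport hcs (by simp)
  have hu' : ContDiff ℝ (⊤ : ℕ∞) (fderiv ℝ u) := hu.fderiv_right (by simp)
  have hcs' : HasCompactSupport (fderiv ℝ u) := hcs.fderiv ℝ
  obtain ⟨K2, hK2⟩ := hu'.lipschitzWith_of_hasCompactSupport hcs' (by simp)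
  obtain ⟨C1, hC1⟩ := hcs.exists_bound_of_continuous hu.continuous
  obtain ⟨C2, hC2⟩ := hcs'.exists_bound_of_continuous hu'.continuous
  have hC20 : 0 ≤ C2 := (norm_nonneg _).trans (hC2 0)
  have hdiff : Differentiable ℝ u := hu.differentiable (by simp)
  refine ⟨K1 + K2 + C2, δ + C1, fun x => (InnerProductSpace.toDual ℝ F).symm (fderiv ℝ u (b x)),
    ?_⟩
  have hlip : ∀ x h, |u (b (x + h)) - u (b x)| ≤ K1 * ‖h‖ := fun x h => by
    have := hK1.dist_le_mul (b (x + h)) (b x)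
    rw [Real.dist_eq, dist_eq_norm, map_add, add_sub_cancel_left] at this
    rw [map_add]
    exact this.trans (by gcongr; exact hb h)
  constructor
  · have := hu.continuous.measurable
    fun_prop
  · apply Continuous.measurable
    exact (InnerProductSpace.toDual ℝ F).symm.continuous.comp
      (hu'.continuous.comp b.continuous)
  · intro x; simpa using hu0 _
  · intro x
    have := hC1 (b x)
    rw [Real.norm_eq_abs] at this
    linarith [le_abs_self (u (b x))]
  · intro x
    rw [LinearIsometryEquiv.norm_map]
    refine (hC2 _).trans ?_
    have : (0 : ℝ) ≤ K1 := K1.2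
    have : (0 : ℝ) ≤ K2 := K2.2
    linarith
  · intro x h
    rw [add_sub_add_left_eq_sub]
    refine (hlip x h).trans ?_
    gcongr
    have : (0 : ℝ) ≤ K2 := K2.2
    linarith
  · intro x h
    rw [add_sub_add_left_eq_sub, InnerProductSpace.toDual_symm_apply]
    have hmv := (convex_segment (𝕜 := ℝ) (b x) (b x + b h)).norm_image_sub_le_of_norm_fderiv_le'
      (f := u) (φ := fderiv ℝ u (b x)) (C := K2 * ‖b h‖) (x := b x) (y := b x + b h)
      (fun y _ => hdiff y) (fun y hy => by
        have h1 := hK2.dist_le_mul y (b x)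
        rw [dist_eq_norm] at h1
        refine h1.trans ?_
        gcongr
        rw [segment_eq_image'] at hy
        obtain ⟨t, ht, rfl⟩ := hy
        simp only [add_sub_cancel_left, dist_eq_norm]
        rw [norm_smul, Real.norm_eq_abs, abs_of_nonneg ht.1]
        exact mul_le_of_le_one_left (norm_nonneg _) ht.2)
      (left_mem_segment ℝ _ _) (right_mem_segment ℝ _ _)
    rw [add_sub_cancel_left, Real.norm_eq_abs] at hmv
    rw [map_add]
    refine hmv.trans ?_
    have : (0 : ℝ) ≤ K1 := K1.2
    have : (0 : ℝ) ≤ K2 := K2.2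
    calc K2 * ‖b h‖ * ‖b h‖ ≤ K2 * ‖h‖ * ‖h‖ := by gcongr <;> exact hb h
      _ = K2 * ‖h‖ ^ 2 := by ring
      _ ≤ _ := by gcongr; linarith

lemma approx_seq (f : F → ℝ) (μ : Measure F) [IsFiniteMeasure μ] (hf : Integrable f μ) :
    ∃ φ : ℕ → F → ℝ, (∀ k, ContDiff ℝ (⊤ : ℕ∞) (φ k)) ∧ (∀ k, HasCompactSupport (φ k)) ∧
      (∀ᵐ y ∂μ, Filter.Tendsto (fun k => φ k y) Filter.atTop (nhds (f y))) ∧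
      Filter.Tendsto (fun k => ∫ y, |φ k y - f y| ∂μ) Filter.atTop (nhds 0) := by
  have hmem : MemLp f 1 μ := memLp_one_iff_integrable.2 hf
  have h := fun k : ℕ => hmem.exist_eLpNorm_sub_le (by simp) le_rfl
    (show (0 : ℝ) < 1 / ((k : ℝ) + 1) by positivity)
  choose φ h1 h2 h3 using h
  have hint : ∀ k, Integrable (φ k) μ := fun k =>
    (h2 k).continuous.integrable_of_hasCompactSupport (h1 k)
  have hlim : Filter.Tendsto (fun k => eLpNorm (φ k - f) 1 μ) Filter.atTop (nhds 0) := by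
    have h0 := ENNReal.tendsto_ofReal (tendsto_one_div_add_atTop_nhds_zero_nat (𝕜 := ℝ))
    rw [ENNReal.ofReal_zero] at h0
    exact tendsto_of_tendsto_of_tendsto_of_le_of_le tendsto_const_nhds h0
      (fun _ => zero_le) (fun k => (eLpNorm_sub_comm _ _ _ _).trans_le (h3 k))
  have hm := tendstoInMeasure_of_tendsto_eLpNorm (p := 1) (by simp)
    (fun k => (hint k).aestronglyMeasurable) hf.aestronglyMeasurable hlim
  obtain ⟨ns, hns, hae⟩ := hm.exists_seq_tendsto_ae
  refine ⟨fun k => φ (ns k), fun k => h2 _, fun k => h1 _, hae, ?_⟩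
  have h4 : ∀ k, ∫ y, |φ k y - f y| ∂μ = (eLpNorm (φ k - f) 1 μ).toReal := fun k => by
    rw [eLpNorm_one_eq_lintegral_enorm, ← integral_norm_eq_lintegral_enorm]
    · simp
    · exact ((hint k).sub hf).aestronglyMeasurable
  simp_rw [h4]
  have := (ENNReal.tendsto_toReal ENNReal.zero_ne_top).comp (hlim.comp hns.tendsto_atTop)
  exact this

end

variable {ι : Type*} [Fintype ι] {F : ι → Type*} [∀ i, NormedAddCommGroup (F i)]
  [∀ i, InnerProductSpace ℝ (F i)] [∀ i, FiniteDimensional ℝ (F i)]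
  [∀ i, MeasurableSpace (F i)] [∀ i, BorelSpace (F i)]

lemma gauss_general (b : ∀ i, E →L[ℝ] F i) (c : ι → ℝ) (hc : ∀ i, 0 ≤ c i)
    (hadj : ∀ i w, ‖ContinuousLinearMap.adjoint (b i) w‖ = ‖w‖)
    (hfr : ∀ w : ∀ i, F i, ‖∑ i, c i • ContinuousLinearMap.adjoint (b i) (w i)‖ ^ 2
      ≤ ∑ i, c i * ‖w i‖ ^ 2)
    (f : ∀ i, F i → ℝ) (hf0 : ∀ i y, 0 ≤ f i y)
    (hf : ∀ i, Integrable (f i) (stdGaussian (F i))) :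
    ∫⁻ z, ENNReal.ofReal (∏ i, (f i (b i z)) ^ (c i)) ∂(stdGaussian E) ≤
      ENNReal.ofReal (∏ i, (∫ y, f i y ∂(stdGaussian (F i))) ^ (c i)) := by
  have hmp : ∀ i, MeasurePreserving (b i) (stdGaussian E) (stdGaussian (F i)) := fun i =>
    ⟨by fun_prop, gauss_map (b i) (hadj i)⟩
  have hb : ∀ i x, ‖b i x‖ ≤ ‖x‖ := fun i x => by
    have h1 : ‖b i x‖ ^ 2 ≤ ‖b i x‖ * ‖x‖ := by
      rw [← real_inner_self_eq_norm_sq, ← ContinuousLinearMap.adjoint_inner_left]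
      refine (real_inner_le_norm _ _).trans ?_
      rw [hadj]
    rcases eq_or_lt_of_le (norm_nonneg (b i x)) with h | h
    · rw [← h]; positivity
    · nlinarith
  choose φ hφ1 hφ2 hφ3 hφ4 using fun i => approx_seq (f i) (stdGaussian (F i)) (hf i)
  set δ : ℕ → ℝ := fun k => 1 / ((k : ℝ) + 1) with hδ
  have hδ0 : ∀ k, 0 < δ k := fun k => by simp only [hδ]; positivity
  have hδl : Filter.Tendsto δ Filter.atTop (nhds 0) :=
    tendsto_one_div_add_atTop_nhds_zero_nat (𝕜 := ℝ)
  set g : ℕ → ∀ i, F i → ℝ := fun k i y => √(φ i k y ^ 2 + δ k ^ 2) with hg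
  have hgc : ∀ k i, ContDiff ℝ (⊤ : ℕ∞) (g k i) := fun k i => by
    refine ContDiff.sqrt ?_ fun y => ?_
    · exact ((hφ1 i k).pow 2).add contDiff_const
    · have := hδ0 k; positivity
  have hgδ : ∀ k i y, δ k ≤ g k i y := fun k i y => by
    apply Real.le_sqrt_of_sq_le; nlinarith [sq_nonneg (φ i k y)]
  have hnice : ∀ k i, ∃ A M l, Nice (b i) A (δ k) M (fun x => g k i (b i x)) l := fun k i => by
    have hu : ContDiff ℝ (⊤ : ℕ∞) (fun y => g k i y - δ k) := (hgc k i).sub contDiff_const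
    have hcs : HasCompactSupport (fun y => g k i y - δ k) := by
      refine (hφ2 i k).comp_left (g := fun t => √(t ^ 2 + δ k ^ 2) - δ k) ?_
      simp [Real.sqrt_sq (hδ0 k).le]
    obtain ⟨A, M, l, h⟩ := nice_of_smooth (b i) (hb i) _ hu hcs
      (fun y => sub_nonneg.2 (hgδ k i y)) (δ k)
    refine ⟨A, M, l, ?_⟩
    simpa using h
  have hineq : ∀ k, ∫⁻ z, ENNReal.ofReal (∏ i, (g k i (b i z)) ^ (c i)) ∂(stdGaussian E) ≤
      ENNReal.ofReal (∏ i, (∫ y, g k i y ∂(stdGaussian (F i))) ^ (c i)) := fun k => by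
    choose A M l hN using hnice k
    have hN' : ∀ i, Nice (b i) (∑ j, |A j|) (δ k) (∑ j, |M j|) (fun x => g k i (b i x)) (l i) :=
      fun i => (hN i).mono
        ((le_abs_self _).trans
          (Finset.single_le_sum (f := fun j => |A j|) (fun j _ => abs_nonneg _)
            (Finset.mem_univ i)))
        ((le_abs_self _).trans
          (Finset.single_le_sum (f := fun j => |M j|) (fun j _ => abs_nonneg _)
            (Finset.mem_univ i)))
    have h := gauss_nice b c hc hadj hfr _ _ _ (hδ0 k) _ l hN'
    have hg0 : ∀ i y, 0 ≤ g k i y := fun i y => Real.sqrt_nonneg _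
    have hint : Integrable (fun z => ∏ i, (g k i (b i z)) ^ (c i)) (stdGaussian E) := by
      refine Integrable.of_bound (C := ∏ i : ι, (∑ j, |M j|) ^ (c i)) ?_
        (Filter.Eventually.of_forall fun z => ?_)
      · exact (Finset.measurable_prod _
          fun i _ => (hN' i).meas.pow_const _).aestronglyMeasurable
      · rw [Real.norm_eq_abs, Finset.abs_prod]
        refine Finset.prod_le_prod (fun i _ => abs_nonneg _) fun i _ => ?_
        rw [abs_of_nonneg (Real.rpow_nonneg (hg0 i _) _)]
        exact Real.rpow_le_rpow (hg0 i _) ((hN' i).hi z) (hc i)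
    rw [← ofReal_integral_eq_lintegral_ofReal hint (Filter.Eventually.of_forall fun z =>
      Finset.prod_nonneg fun i _ => Real.rpow_nonneg (hg0 i _) _)]
    refine ENNReal.ofReal_le_ofReal (h.trans (le_of_eq ?_))
    refine Finset.prod_congr rfl fun i _ => ?_
    congr 1
    rw [← (hmp i).map_eq, integral_map (by fun_prop)]
    exact (hgc k i).continuous.aestronglyMeasurable
  -- almost everywhere convergence
  have hae : ∀ᵐ z ∂(stdGaussian E), ∀ i,
      Filter.Tendsto (fun k => g k i (b i z)) Filter.atTop (nhds (f i (b i z))) := by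
    rw [ae_all_iff]
    intro i
    filter_upwards [(hmp i).quasiMeasurePreserving.ae (hφ3 i)] with z hz
    have h1 := ((hz.pow 2).add (hδl.pow 2)).sqrt
    simpa [Real.sqrt_sq (hf0 i _)] using h1
  have hae2 : ∀ᵐ z ∂(stdGaussian E), Filter.Tendsto
      (fun k => ENNReal.ofReal (∏ i, (g k i (b i z)) ^ (c i))) Filter.atTop
      (nhds (ENNReal.ofReal (∏ i, (f i (b i z)) ^ (c i)))) := by
    filter_upwards [hae] with z hz
    refine ENNReal.tendsto_ofReal (tendsto_finsetProd _ fun i _ => ?_)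
    exact (hz i).rpow_const (Or.inr (hc i))
  have hgint : ∀ k i, Integrable (g k i) (stdGaussian (F i)) := fun k i => by
    have hi : Integrable (φ i k) (stdGaussian (F i)) :=
      (hφ1 i k).continuous.integrable_of_hasCompactSupport (hφ2 i k)
    refine (hi.abs.add (integrable_const (δ k))).mono' (hgc k i).continuous.aestronglyMeasurable
      (Filter.Eventually.of_forall fun y => ?_)
    rw [Real.norm_eq_abs, abs_of_nonneg (Real.sqrt_nonneg _)]
    refine Real.sqrt_le_iff.2 ⟨?_, ?_⟩
    · have := hδ0 k
      simp only [Pi.add_apply]; positivity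
    · have := mul_nonneg (abs_nonneg (φ i k y)) (hδ0 k).le
      simp only [Pi.add_apply]
      nlinarith [sq_abs (φ i k y)]
  have hilim : ∀ i, Filter.Tendsto (fun k => ∫ y, g k i y ∂(stdGaussian (F i))) Filter.atTop
      (nhds (∫ y, f i y ∂(stdGaussian (F i)))) := fun i => by
    rw [tendsto_iff_dist_tendsto_zero]
    have hz : Filter.Tendsto (fun k => ∫ y, |φ i k y - f i y| ∂(stdGaussian (F i)) + δ k)
        Filter.atTop (nhds 0) := by
      simpa using (hφ4 i).add hδl
    refine squeeze_zero (fun _ => dist_nonneg) (fun k => ?_) hz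
    have hi : Integrable (φ i k) (stdGaussian (F i)) :=
      (hφ1 i k).continuous.integrable_of_hasCompactSupport (hφ2 i k)
    rw [Real.dist_eq, ← integral_sub (hgint k i) (hf i)]
    refine abs_integral_le_integral_abs.trans ?_
    have h2 : ∫ y, |φ i k y - f i y| ∂(stdGaussian (F i)) + δ k
        = ∫ y, (|φ i k y - f i y| + δ k) ∂(stdGaussian (F i)) := by
      have hI : Integrable (fun y => |φ i k y - f i y|) (stdGaussian (F i)) := (hi.sub (hf i)).abs
      rw [integral_add hI (integrable_const _)]; simp
    rw [h2]
    refine integral_mono ((hgint k i).sub (hf i)).abs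
      ((hi.sub (hf i)).abs.add (integrable_const _)) fun y => ?_
    have h3 : |g k i y - (|φ i k y|)| ≤ δ k := by
      have h4 : |φ i k y| ≤ g k i y := by
        apply Real.le_sqrt_of_sq_le; rw [sq_abs]; nlinarith [sq_nonneg (δ k)]
      have h5 : g k i y ≤ |φ i k y| + δ k := by
        have := hδ0 k
        refine Real.sqrt_le_iff.2 ⟨by positivity, ?_⟩
        have := mul_nonneg (abs_nonneg (φ i k y)) (hδ0 k).le
        nlinarith [sq_abs (φ i k y)]
      rw [abs_le]; constructor <;> linarith [hδ0 k]
    have h6 : |(|φ i k y| - f i y)| ≤ |φ i k y - f i y| := by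
      have := abs_abs_sub_abs_le_abs_sub (φ i k y) (f i y)
      rwa [abs_of_nonneg (hf0 i y)] at this
    have h7 := abs_add_le (g k i y - |φ i k y|) (|φ i k y| - f i y)
    rw [sub_add_sub_cancel] at h7
    simp only [Pi.add_apply, Pi.sub_apply]
    linarith
  have hRlim : Filter.Tendsto
      (fun k => ENNReal.ofReal (∏ i, (∫ y, g k i y ∂(stdGaussian (F i))) ^ (c i))) Filter.atTop
      (nhds (ENNReal.ofReal (∏ i, (∫ y, f i y ∂(stdGaussian (F i))) ^ (c i)))) := by
    refine ENNReal.tendsto_ofReal (tendsto_finsetProd _ fun i _ => ?_)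
    exact (hilim i).rpow_const (Or.inr (hc i))
  calc ∫⁻ z, ENNReal.ofReal (∏ i, (f i (b i z)) ^ (c i)) ∂(stdGaussian E)
      = ∫⁻ z, Filter.liminf (fun k => ENNReal.ofReal (∏ i, (g k i (b i z)) ^ (c i)))
          Filter.atTop ∂(stdGaussian E) :=
        lintegral_congr_ae (hae2.mono fun z hz => hz.liminf_eq.symm)
    _ ≤ Filter.liminf (fun k => ∫⁻ z, ENNReal.ofReal (∏ i, (g k i (b i z)) ^ (c i))
          ∂(stdGaussian E)) Filter.atTop := by
        refine lintegral_liminf_le fun k => ?_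
        refine ENNReal.measurable_ofReal.comp (Finset.measurable_prod _ fun i _ => ?_)
        exact ((hgc k i).continuous.measurable.comp (b i).continuous.measurable).pow_const _
    _ ≤ Filter.liminf (fun k => ENNReal.ofReal
          (∏ i, (∫ y, g k i y ∂(stdGaussian (F i))) ^ (c i))) Filter.atTop :=
        Filter.liminf_le_liminf (Filter.Eventually.of_forall hineq)
    _ = _ := hRlim.liminf_eq

end approx
end BL

namespace BL
open ProbabilityTheory Real
open scoped InnerProductSpace

noncomputable def pden {n : ℕ} (x : Fin n → ℝ) : ℝ := ∏ j, gaussianPDFReal 0 1 (x j)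

lemma pden_pos {n : ℕ} (x : Fin n → ℝ) : 0 < pden x :=
  Finset.prod_pos fun j _ => gaussianPDFReal_pos 0 1 _ one_ne_zero

lemma pden_meas {n : ℕ} : Measurable (pden (n := n)) :=
  Finset.measurable_prod _ fun j _ =>
    (measurable_gaussianPDFReal 0 1).comp (measurable_pi_apply j)

lemma pden_eq {n : ℕ} (x : Fin n → ℝ) :
    pden x = exp (-(n : ℝ) * log (√(2 * π)) - (∑ j, x j ^ 2) / 2) := by
  have h2 : (0 : ℝ) < √(2 * π) := by positivity
  have h : ∀ t : ℝ, gaussianPDFReal 0 1 t = exp (- log (√(2 * π)) - t ^ 2 / 2) := fun t => by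
    rw [gaussianPDFReal, sub_eq_add_neg (-log _), exp_add, exp_neg (log _), exp_log h2]
    simp [neg_div]
  unfold pden
  simp_rw [h]
  rw [← exp_sum, Finset.sum_sub_distrib, Finset.sum_div]
  simp

lemma pi_dens (n : ℕ) : Measure.pi (fun _ : Fin n => gaussianReal 0 1)
    = (volume : Measure (Fin n → ℝ)).withDensity (fun x => ENNReal.ofReal (pden x)) := by
  refine Measure.pi_eq fun s hs => ?_
  rw [withDensity_apply _ (MeasurableSet.univ_pi hs), volume_pi, Measure.restrict_pi_pi,
    ← ofReal_integral_eq_lintegral_ofReal]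
  · unfold pden
    rw [integral_fintype_prod_eq_prod, ENNReal.ofReal_prod_of_nonneg]
    · refine Finset.prod_congr rfl fun i _ => ?_
      rw [gaussianReal_apply_eq_integral _ one_ne_zero]
    · intro i _
      exact integral_nonneg fun x => gaussianPDFReal_nonneg _ _ _
  · unfold pden
    exact Integrable.fintype_prod fun i => (integrable_gaussianPDFReal 0 1).restrict
  · exact Filter.Eventually.of_forall fun x => (pden_pos x).le

lemma gauss_lintegral {n : ℕ} (G : (Fin n → ℝ) → ENNReal) :
    ∫⁻ z, G (WithLp.ofLp z) ∂(stdGaussian (EuclideanSpace ℝ (Fin n)))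
      = ∫⁻ x, ENNReal.ofReal (pden x) * G x := by
  rw [← map_pi_eq_stdGaussian]
  have h := lintegral_map_equiv (μ := Measure.pi (fun _ : Fin n => gaussianReal 0 1))
    (fun z => G (WithLp.ofLp z)) (MeasurableEquiv.toLp 2 (Fin n → ℝ))
  refine Eq.trans h ?_
  rw [pi_dens, lintegral_withDensity_eq_lintegral_mul_non_measurable]
  · rfl
  · exact pden_meas.ennreal_ofReal
  · simp

lemma gauss_integral {n : ℕ} (h : (Fin n → ℝ) → ℝ) (hi : Integrable h) :
    Integrable (fun z => h (WithLp.ofLp z) / pden (WithLp.ofLp z))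
      (stdGaussian (EuclideanSpace ℝ (Fin n))) ∧
    ∫ z, h (WithLp.ofLp z) / pden (WithLp.ofLp z) ∂(stdGaussian (EuclideanSpace ℝ (Fin n)))
      = ∫ x, h x := by
  have e : ∀ x, (ENNReal.ofReal (pden x)).toReal • (h x / pden x) = h x := fun x => by
    have := pden_pos x
    rw [ENNReal.toReal_ofReal this.le, smul_eq_mul]; field_simp
  rw [← map_pi_eq_stdGaussian]
  constructor
  · refine (integrable_map_equiv (MeasurableEquiv.toLp 2 (Fin n → ℝ)) _).2 ?_
    rw [pi_dens, integrable_withDensity_iff_integrable_smul' pden_meas.ennreal_ofReal (by simp)]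
    refine hi.congr (Filter.Eventually.of_forall fun x => ?_)
    exact (e x).symm
  · refine Eq.trans (integral_map_equiv (MeasurableEquiv.toLp 2 (Fin n → ℝ)) _) ?_
    rw [pi_dens, integral_withDensity_eq_integral_toReal_smul pden_meas.ennreal_ofReal (by simp)]
    exact integral_congr_ae (Filter.Eventually.of_forall e)

lemma frame_sq {m n : ℕ} (ni : Fin m → ℕ) (c : Fin m → ℝ)
    (B : ∀ i, Matrix (Fin (ni i)) (Fin n) ℝ)
    (hframe2 : ∑ i, c i • ((B i)ᵀ * B i) = (1 : Matrix (Fin n) (Fin n) ℝ)) (x : Fin n → ℝ) :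
    ∑ i, c i * ∑ j, ((B i) *ᵥ x) j ^ 2 = ∑ j, x j ^ 2 := by
  have h1 : x ⬝ᵥ ((∑ i, c i • ((B i)ᵀ * B i)) *ᵥ x) = x ⬝ᵥ x := by rw [hframe2, one_mulVec]
  rw [Matrix.sum_mulVec, dotProduct_sum] at h1
  have h2 : ∑ j, x j ^ 2 = x ⬝ᵥ x := by simp [dotProduct, sq]
  rw [h2, ← h1]
  refine Finset.sum_congr rfl fun i _ => ?_
  rw [smul_mulVec, dotProduct_smul, ← mulVec_mulVec, dotProduct_mulVec, vecMul_transpose]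
  simp [dotProduct, sq]

lemma frame_trace {m n : ℕ} (ni : Fin m → ℕ) (c : Fin m → ℝ)
    (B : ∀ i, Matrix (Fin (ni i)) (Fin n) ℝ)
    (hframe1 : ∀ i, B i * (B i)ᵀ = (1 : Matrix (Fin (ni i)) (Fin (ni i)) ℝ))
    (hframe2 : ∑ i, c i • ((B i)ᵀ * B i) = (1 : Matrix (Fin n) (Fin n) ℝ)) :
    ∑ i, c i * (ni i : ℝ) = n := by
  have h := congrArg Matrix.trace hframe2
  rw [Matrix.trace_sum] at h
  simp_rw [Matrix.trace_smul, Matrix.trace_mul_comm _ (B _), hframe1] at h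
  simpa using h

lemma pden_prod {m n : ℕ} (ni : Fin m → ℕ) (c : Fin m → ℝ)
    (B : ∀ i, Matrix (Fin (ni i)) (Fin n) ℝ)
    (hframe1 : ∀ i, B i * (B i)ᵀ = (1 : Matrix (Fin (ni i)) (Fin (ni i)) ℝ))
    (hframe2 : ∑ i, c i • ((B i)ᵀ * B i) = (1 : Matrix (Fin n) (Fin n) ℝ)) (x : Fin n → ℝ) :
    ∏ i, pden ((B i) *ᵥ x) ^ (c i) = pden x := by
  simp_rw [pden_eq, ← exp_mul]
  rw [← exp_sum, ← frame_sq ni c B hframe2, ← frame_trace ni c B hframe1 hframe2]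
  congr 1
  rw [Finset.sum_div, neg_mul, Finset.sum_mul, ← Finset.sum_neg_distrib,
    ← Finset.sum_sub_distrib]
  exact Finset.sum_congr rfl fun i _ => by ring

noncomputable def bmap {k n : ℕ} (B : Matrix (Fin k) (Fin n) ℝ) :
    EuclideanSpace ℝ (Fin n) →L[ℝ] EuclideanSpace ℝ (Fin k) :=
  LinearMap.toContinuousLinearMap (Matrix.toEuclideanLin B)

lemma bmap_apply {k n : ℕ} (B : Matrix (Fin k) (Fin n) ℝ) (x : EuclideanSpace ℝ (Fin n)) :
    WithLp.ofLp (bmap B x) = B *ᵥ WithLp.ofLp x := rfl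

lemma bmap_adjoint {k n : ℕ} (B : Matrix (Fin k) (Fin n) ℝ) :
    ContinuousLinearMap.adjoint (bmap B) = bmap Bᵀ := by
  unfold bmap
  rw [← LinearMap.adjoint_toContinuousLinearMap, ← Matrix.toEuclideanLin_conjTranspose_eq_adjoint,
    conjTranspose_eq_transpose_of_trivial]

lemma bmap_hadj {k n : ℕ} (B : Matrix (Fin k) (Fin n) ℝ) (h : B * Bᵀ = 1)
    (w : EuclideanSpace ℝ (Fin k)) : ‖ContinuousLinearMap.adjoint (bmap B) w‖ = ‖w‖ := by
  have h1 : bmap B (ContinuousLinearMap.adjoint (bmap B) w) = w := by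
    rw [bmap_adjoint]
    apply WithLp.ofLp_injective
    rw [bmap_apply, bmap_apply, mulVec_mulVec, h, one_mulVec]
  have h2 : ‖ContinuousLinearMap.adjoint (bmap B) w‖ ^ 2 = ‖w‖ ^ 2 := by
    rw [← real_inner_self_eq_norm_sq, ContinuousLinearMap.adjoint_inner_left, h1,
      real_inner_self_eq_norm_sq]
  exact (pow_left_inj₀ (norm_nonneg _) (norm_nonneg _) two_ne_zero).1 h2

lemma bmap_frame {m n : ℕ} (ni : Fin m → ℕ) (c : Fin m → ℝ) (hc : ∀ i, 0 < c i)
    (B : ∀ i, Matrix (Fin (ni i)) (Fin n) ℝ)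
    (hframe2 : ∑ i, c i • ((B i)ᵀ * B i) = (1 : Matrix (Fin n) (Fin n) ℝ))
    (w : ∀ i, EuclideanSpace ℝ (Fin (ni i))) :
    ‖∑ i, c i • ContinuousLinearMap.adjoint (bmap (B i)) (w i)‖ ^ 2
      ≤ ∑ i, c i * ‖w i‖ ^ 2 := by
  set v := ∑ i, c i • ContinuousLinearMap.adjoint (bmap (B i)) (w i) with hv
  have h1 : ‖v‖ ^ 2 = ∑ i, c i * ⟪w i, bmap (B i) v⟫_ℝ := by
    rw [← real_inner_self_eq_norm_sq]
    nth_rw 1 [hv]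
    rw [sum_inner]
    refine Finset.sum_congr rfl fun i _ => ?_
    rw [real_inner_smul_left, ContinuousLinearMap.adjoint_inner_left]
  have h2 : ∑ i, c i * ‖bmap (B i) v‖ ^ 2 = ‖v‖ ^ 2 := by
    have := frame_sq ni c B hframe2 (WithLp.ofLp v)
    simp only [EuclideanSpace.real_norm_sq_eq]
    exact this
  have h3 : ∑ i, c i * ⟪w i, bmap (B i) v⟫_ℝ
      ≤ ∑ i, (c i * ‖w i‖ ^ 2 + c i * ‖bmap (B i) v‖ ^ 2) / 2 := by
    refine Finset.sum_le_sum fun i _ => ?_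
    have h4 := real_inner_le_norm (w i) (bmap (B i) v)
    have h5 := sq_nonneg (‖w i‖ - ‖bmap (B i) v‖)
    have h6 : ⟪w i, bmap (B i) v⟫_ℝ ≤ (‖w i‖ ^ 2 + ‖bmap (B i) v‖ ^ 2) / 2 := by nlinarith
    have := mul_le_mul_of_nonneg_left h6 (hc i).le
    linarith
  rw [← Finset.sum_div, Finset.sum_add_distrib, h2, ← h1] at h3
  linarith

end BL

/-- **Brascamp–Lieb inequality under the frame condition** (geometric case).
If `Bᵢ Bᵢ* = id` for every `i` and `∑ cᵢ Bᵢ* Bᵢ = id`, then the Brascamp–Lieb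
inequality holds with constant `1`. -/
theorem brascamp_lieb_frame_condition
    (m n : ℕ) (ni : Fin m → ℕ) (c : Fin m → ℝ) (hc : ∀ i, 0 < c i)
    (B : ∀ i, Matrix (Fin (ni i)) (Fin n) ℝ)
    (hB : ∀ i, Function.Surjective (B i).mulVec)
    (hframe1 : ∀ i, B i * (B i)ᵀ = (1 : Matrix (Fin (ni i)) (Fin (ni i)) ℝ))
    (hframe2 : ∑ i, c i • ((B i)ᵀ * B i) = (1 : Matrix (Fin n) (Fin n) ℝ))
    (f : ∀ i, (Fin (ni i) → ℝ) → ℝ)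
    (hf0 : ∀ i x, 0 ≤ f i x) (hfint : ∀ i, Integrable (f i)) :
    ∫ x : Fin n → ℝ, ∏ i, (f i ((B i).mulVec x)) ^ (c i) ≤
      ∏ i, (∫ y : Fin (ni i) → ℝ, f i y) ^ (c i) := by
  have hR0 : 0 ≤ ∏ i, (∫ y : Fin (ni i) → ℝ, f i y) ^ (c i) :=
    Finset.prod_nonneg fun i _ => Real.rpow_nonneg (integral_nonneg (hf0 i)) _
  by_cases hL : Integrable (fun x : Fin n → ℝ => ∏ i, (f i ((B i).mulVec x)) ^ (c i))
  swap
  · rw [integral_undef hL]; exact hR0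
  have hg := BL.gauss_general (fun i => BL.bmap (B i)) c (fun i => (hc i).le)
    (fun i => BL.bmap_hadj (B i) (hframe1 i)) (BL.bmap_frame ni c hc B hframe2)
    (fun i y => f i (WithLp.ofLp y) / BL.pden (WithLp.ofLp y))
    (fun i y => div_nonneg (hf0 i _) (BL.pden_pos _).le)
    (fun i => (BL.gauss_integral (f i) (hfint i)).1)
  simp only [fun i => (BL.gauss_integral (f i) (hfint i)).2, BL.bmap_apply] at hg
  rw [BL.gauss_lintegral (fun x => ENNReal.ofReal
    (∏ i, (f i (B i *ᵥ x) / BL.pden (B i *ᵥ x)) ^ (c i)))] at hg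
  have he : ∀ x : Fin n → ℝ, ENNReal.ofReal (BL.pden x) * ENNReal.ofReal
      (∏ i, (f i (B i *ᵥ x) / BL.pden (B i *ᵥ x)) ^ (c i))
      = ENNReal.ofReal (∏ i, (f i (B i *ᵥ x)) ^ (c i)) := fun x => by
    rw [← ENNReal.ofReal_mul (BL.pden_pos x).le]
    congr 1
    simp_rw [Real.div_rpow (hf0 _ _) (BL.pden_pos _).le]
    rw [Finset.prod_div_distrib, BL.pden_prod ni c B hframe1 hframe2]
    have := BL.pden_pos x
    field_simp
  simp_rw [he] at hg
  rw [← ofReal_integral_eq_lintegral_ofReal hL (Filter.Eventually.of_forall fun x =>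
    Finset.prod_nonneg fun i _ => Real.rpow_nonneg (hf0 i _) _)] at hg
  exact (ENNReal.ofReal_le_ofReal_iff hR0).1 hg
end
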